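/- arXiv:1902.04945 — 2 statements merged into one kernel-verified Lean document; each statement's English description precedes it below -/
import Mathlib

section
/- Let d ≥ 1 be an integer, σ1, σ2 ∈ ℝ, 0 < q_i ≤ ∞ and 0 < p_i ≤ u_i < ∞ for i = 1, 2. Assume that (σ1 − σ2)/d > max{0, 1/u1 − 1/u2, (p1/u1)(1/p1 − 1/p2)} and that this maximum equals 0 (i.e. u2 ≤ u1 and p2 ≤ p1). Then there exist constants c1, c2 > 0 such that for all k ∈ ℕ, c1 · k^{−(σ1−σ2)/d} ≤ e_k(id : ñ^{σ1}_{u1,p1,q1}(Q) → ñ^{σ2}_{u2,p2,q2}(Q)) ≤ c2 · k^{−(σ1−σ2)/d}. -/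
open scoped ENNReal NNReal

noncomputable section

/-- `Q_{j,m} ⊆ Q = [0,1)^d` iff `0 ≤ m i < 2^j` for every coordinate `i`. -/
def inUnitCube (d j : ℕ) (m : Fin d → ℤ) : Prop :=
  ∀ i, 0 ≤ m i ∧ m i < 2 ^ j

/-- For `ν ≤ j`: `Q_{j,m} ⊆ Q_{ν,k}`. -/
def cubeSub (d j ν : ℕ) (m k : Fin d → ℤ) : Prop :=
  ∀ i, k i * 2 ^ (j - ν) ≤ m i ∧ m i < (k i + 1) * 2 ^ (j - ν)

/-- The finite-dimensional Morrey quasi-norm `‖· | m^{2^{jd}}_{u,p}‖` (`ℝ≥0∞`-valued),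
on coefficients indexed by the `m ∈ ℤ^d` with `Q_{j,m} ⊆ Q` (other coordinates are ignored). -/
def mNorm (d : ℕ) (u p : ℝ) (j : ℕ) (lam : (Fin d → ℤ) → ℂ) : ℝ≥0∞ :=
  ⨆ νk : {νk : ℕ × (Fin d → ℤ) // νk.1 ≤ j ∧ inUnitCube d νk.1 νk.2},
    (2 : ℝ≥0∞) ^ ((d : ℝ) * ((j : ℝ) - (νk.1.1 : ℝ)) * (1 / u - 1 / p)) *
      (∑' m : {m : Fin d → ℤ // cubeSub d j νk.1.1 m νk.1.2},
        ((‖lam m.1‖₊ : ℝ≥0∞)) ^ p) ^ (1 / p)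

/-- The `ℓ_q^{2^{jd}}` quasi-norm (`0 < q < ∞`) on level-`j` coefficients. -/
def lqNorm (d : ℕ) (q : ℝ) (j : ℕ) (lam : (Fin d → ℤ) → ℂ) : ℝ≥0∞ :=
  (∑' m : {m : Fin d → ℤ // inUnitCube d j m}, ((‖lam m.1‖₊ : ℝ≥0∞)) ^ q) ^ (1 / q)

/-- The quasi-norm of the sequence space `ñ^σ_{u,p,q}(Q)`, `q ∈ (0,∞]`. -/
def nNorm (d : ℕ) (σ u p : ℝ) (q : ℝ≥0∞) (lam : ℕ → (Fin d → ℤ) → ℂ) : ℝ≥0∞ :=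
  if q = ∞ then
    ⨆ j : ℕ, (2 : ℝ≥0∞) ^ ((j : ℝ) * (σ - d / u)) * mNorm d u p j (lam j)
  else
    (∑' j : ℕ, ((2 : ℝ≥0∞) ^ ((j : ℝ) * (σ - d / u)) * mNorm d u p j (lam j)) ^ q.toReal) ^
      (1 / q.toReal)

/-- `k`-th entropy number of the identity map between two quasi-norms on one ambient group:
the infimum of all `ε > 0` such that the `N₁`-unit ball is covered by `2^(k-1)` `N₂`-balls of
radius `ε`. -/
def entropyNumber {Λ : Type*} [AddCommGroup Λ] (N₁ N₂ : Λ → ℝ≥0∞) (k : ℕ) : ℝ≥0∞ :=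
  sInf {ε : ℝ≥0∞ | 0 < ε ∧ ∃ c : Fin (2 ^ (k - 1)) → Λ,
    ∀ x : Λ, N₁ x ≤ 1 → ∃ i, N₂ (x - c i) ≤ ε}

/-- Operator quasi-norm of the identity map between two quasi-norms on one ambient space:
the smallest `C` with `N₂ x ≤ C · N₁ x` for all `x`. -/
def opNorm {Λ : Type*} (N₁ N₂ : Λ → ℝ≥0∞) : ℝ≥0∞ :=
  sInf {C : ℝ≥0∞ | ∀ x, N₂ x ≤ C * N₁ x}

end


lemma aux_exp (p t : ℝ) (hp : 0 < p) (ht : 0 ≤ t) : 1 + t ≤ 2 * Real.exp (t ^ p / p) := by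
  have h0 : 0 ≤ t ^ p := Real.rpow_nonneg ht p
  rcases le_or_gt t 1 with h | h
  · have : 1 ≤ Real.exp (t ^ p / p) := Real.one_le_exp (by positivity)
    linarith
  · have hpos : 0 < t := by linarith
    have h1 : Real.log (t ^ p) ≤ t ^ p - 1 := Real.log_le_sub_one_of_pos (by positivity)
    rw [Real.log_rpow hpos] at h1
    have h2 : Real.log t ≤ t ^ p / p := by
      rw [le_div_iff₀ hp]; linarith
    have h3 : t ≤ Real.exp (t ^ p / p) := by
      rw [← Real.log_le_iff_le_exp hpos]; exact h2
    linarith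

lemma aux_sum (X : ℕ) :
    ∑ z ∈ Finset.Icc (-(X : ℤ)) X, 1 / (1 + |(z : ℝ)|) ^ 2 ≤ 4 - 2 / ((X : ℝ) + 1) := by
  induction X with
  | zero => norm_num
  | succ X ih =>
    have hE : Finset.Icc (-((X + 1 : ℕ) : ℤ)) ((X + 1 : ℕ) : ℤ) =
        insert (-((X : ℤ) + 1)) (insert ((X : ℤ) + 1) (Finset.Icc (-(X : ℤ)) X)) := by
      ext z; simp only [Finset.mem_Icc, Finset.mem_insert]; push_cast; omega
    rw [hE, Finset.sum_insert (by simp only [Finset.mem_Icc, Finset.mem_insert]; omega),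
      Finset.sum_insert (by simp only [Finset.mem_Icc]; omega)]
    have e1 : |((-((X : ℤ) + 1) : ℤ) : ℝ)| = (X : ℝ) + 1 := by
      push_cast; rw [abs_neg]; exact abs_of_nonneg (by positivity)
    have e2 : |(((X : ℤ) + 1 : ℤ) : ℝ)| = (X : ℝ) + 1 := by
      push_cast; exact abs_of_nonneg (by positivity)
    rw [e1, e2]
    push_cast
    have hx : (0 : ℝ) ≤ X := by positivity
    have : 1 / (1 + ((X : ℝ) + 1)) ^ 2 + 1 / (1 + ((X : ℝ) + 1)) ^ 2 ≤
        2 / ((X : ℝ) + 1) - 2 / ((X : ℝ) + 1 + 1) := by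
      rw [div_sub_div _ _ (by positivity) (by positivity), ← add_div,
        div_le_div_iff₀ (by positivity) (by positivity)]
      nlinarith [mul_nonneg hx hx]
    linarith

lemma aux_count {ι : Type*} [Fintype ι] [DecidableEq ι] (X : ℕ) :
    ∃ S : Finset (ι → ℤ), S.card ≤ X ^ 2 * 4 ^ (Fintype.card ι) ∧
      ∀ z : ι → ℤ, ∏ i, (1 + |(z i : ℝ)|) ≤ X → z ∈ S := by
  classical
  let P := Fintype.piFinset (fun _ : ι => Finset.Icc (-(X : ℤ)) X)
  refine ⟨P.filter (fun z => ∏ i, (1 + |(z i : ℝ)|) ≤ X), ?_, ?_⟩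
  · have h1 : ∑ z ∈ P, ∏ i, (1 / (1 + |(z i : ℝ)|) ^ 2) ≤ 4 ^ (Fintype.card ι) := by
      rw [← Finset.prod_univ_sum (fun _ : ι => Finset.Icc (-(X : ℤ)) X)
        (fun _ z => 1 / (1 + |(z : ℝ)|) ^ 2)]
      rw [Finset.prod_const, Finset.card_univ]
      apply pow_le_pow_left₀ (by positivity)
      have := aux_sum X
      have h2 : 0 ≤ 2 / ((X : ℝ) + 1) := by positivity
      linarith
    have h2 : ∑ z ∈ P.filter (fun z => ∏ i, (1 + |(z i : ℝ)|) ≤ X), (1 : ℝ) ≤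
        ∑ z ∈ P, (X : ℝ) ^ 2 * ∏ i, (1 / (1 + |(z i : ℝ)|) ^ 2) := by
      refine (Finset.sum_le_sum (f := fun _ => (1:ℝ)) (g := fun z : ι → ℤ => (X : ℝ) ^ 2 * ∏ i, (1 / (1 + |(z i : ℝ)|) ^ 2)) ?_).trans
        (Finset.sum_le_sum_of_subset_of_nonneg (Finset.filter_subset _ _) ?_)
      · intro z hz
        have hz2 := (Finset.mem_filter.mp hz).2
        have hpos : 0 < ∏ i, (1 + |(z i : ℝ)|) := Finset.prod_pos (fun i _ => by positivity)
        simp only [one_div]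
        rw [Finset.prod_inv_distrib, Finset.prod_pow, ← div_eq_mul_inv,
          le_div_iff₀ (by positivity), one_mul]
        exact pow_le_pow_left₀ hpos.le hz2 2
      · intro z _ _
        positivity
    rw [← Finset.mul_sum] at h2
    simp only [Finset.sum_const, nsmul_eq_mul, mul_one] at h2
    have h3 := h2.trans (mul_le_mul_of_nonneg_left h1 (by positivity))
    exact_mod_cast h3
  · intro z hz
    rw [Finset.mem_filter]
    refine ⟨?_, hz⟩
    rw [Fintype.mem_piFinset]
    intro i
    have h1 : 1 + |(z i : ℝ)| ≤ ∏ i, (1 + |(z i : ℝ)|) := by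
      calc 1 + |(z i : ℝ)| = ∏ l, (if l = i then 1 + |(z l : ℝ)| else 1) := by simp
        _ ≤ _ := by
          refine Finset.prod_le_prod (fun l _ => by split_ifs <;> positivity) fun l _ => ?_
          have := abs_nonneg (z l : ℝ)
          split_ifs <;> linarith
    have h2 : |(z i : ℝ)| ≤ X := by linarith
    have h3 : |z i| ≤ (X : ℤ) := by exact_mod_cast h2
    rw [Finset.mem_Icc]
    exact abs_le.mp h3

lemma cover_real (p : ℝ) (hp : 0 < p) : ∃ a : ℕ, ∀ {ι : Type} [Fintype ι] (r : ℕ), 1 ≤ r →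
    ∃ F : Finset (ι → ℝ), F.card ≤ 2 ^ (a * r * Fintype.card ι) ∧
      ∀ x : ι → ℝ, ∑ i, |x i| ^ p ≤ Fintype.card ι → ∃ c ∈ F, ∀ i, |x i - c i| ≤ (2 ^ r)⁻¹ := by
  obtain ⟨b, hb⟩ := pow_unbounded_of_one_lt (Real.exp (1 / p)) (one_lt_two)
  refine ⟨8 + 2 * b, ?_⟩
  intro ι _ r hr
  classical
  set n := Fintype.card ι with hn
  obtain ⟨S, hS, hS2⟩ := aux_count (ι := ι) (2 ^ ((r + 2 + b) * n))
  refine ⟨S.image (fun z i => (z i : ℝ) / 2 ^ r), ?_, ?_⟩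
  · refine Finset.card_image_le.trans (hS.trans ?_)
    rw [show (4 : ℕ) = 2 ^ 2 by norm_num, ← pow_mul, ← pow_mul, ← pow_add]
    apply Nat.pow_le_pow_right (by norm_num)
    have : (r + 2 + b) * 2 + 2 ≤ (8 + 2 * b) * r := by nlinarith
    calc _ = ((r + 2 + b) * 2 + 2) * n := by rw [← hn]; ring
      _ ≤ _ := Nat.mul_le_mul_right n this
  · intro x hx
    have h2r : (1 : ℝ) ≤ 2 ^ r := one_le_pow₀ (by norm_num)
    refine ⟨_, Finset.mem_image.mpr ⟨fun i => ⌊x i * 2 ^ r⌋, hS2 _ ?_, rfl⟩, ?_⟩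
    · have h1 : ∀ i, 1 + |((⌊x i * 2 ^ r⌋ : ℤ) : ℝ)| ≤ 2 ^ (r + 2) * Real.exp (|x i| ^ p / p) := by
        intro i
        have ha := aux_exp p |x i| hp (abs_nonneg _)
        have hb : |((⌊x i * 2 ^ r⌋ : ℤ) : ℝ)| ≤ |x i| * 2 ^ r + 1 := by
          have h1 := Int.floor_le (x i * 2 ^ r)
          have h2 := Int.lt_floor_add_one (x i * 2 ^ r)
          have h3 : |x i * 2 ^ r| = |x i| * 2 ^ r := by rw [abs_mul, abs_of_pos (a := (2:ℝ) ^ r) (by positivity)]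
          have h4 := neg_abs_le (x i * 2 ^ r)
          have h5 := le_abs_self (x i * 2 ^ r)
          rw [abs_le]; constructor <;> linarith
        calc _ ≤ 2 ^ r * (2 * (1 + |x i|)) := by nlinarith [abs_nonneg (x i)]
          _ ≤ 2 ^ r * (2 * (2 * Real.exp (|x i| ^ p / p))) := by gcongr
          _ = _ := by ring
      calc ∏ i, (1 + |((⌊x i * 2 ^ r⌋ : ℤ) : ℝ)|) ≤ ∏ i, 2 ^ (r + 2) * Real.exp (|x i| ^ p / p) :=
            Finset.prod_le_prod (fun i _ => by positivity) (fun i _ => h1 i)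
        _ = (2 ^ (r + 2)) ^ n * Real.exp ((∑ i, |x i| ^ p) / p) := by
            rw [Finset.prod_mul_distrib, Finset.prod_const, Finset.card_univ, ← Real.exp_sum,
              Finset.sum_div]
        _ ≤ (2 ^ (r + 2)) ^ n * Real.exp (n / p) := by gcongr
        _ = (2 ^ (r + 2)) ^ n * (Real.exp (1 / p)) ^ n := by
            rw [← Real.exp_nat_mul]; congr 2; ring
        _ ≤ (2 ^ (r + 2)) ^ n * (2 ^ b) ^ n := by gcongr
        _ = _ := by push_cast; rw [← mul_pow, ← pow_add, ← pow_mul]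
    · intro i
      have h1 := Int.floor_le (x i * 2 ^ r)
      have h2 := Int.lt_floor_add_one (x i * 2 ^ r)
      have h3 : x i - (⌊x i * 2 ^ r⌋ : ℝ) / 2 ^ r = (x i * 2 ^ r - ⌊x i * 2 ^ r⌋) / 2 ^ r := by
        field_simp
      show |x i - (⌊x i * 2 ^ r⌋ : ℝ) / 2 ^ r| ≤ _
      rw [h3, abs_of_nonneg (by apply div_nonneg; linarith; positivity), ← one_div]
      gcongr
      linarith

lemma cover_complex (p : ℝ) (hp : 0 < p) : ∃ a : ℕ, 1 ≤ a ∧ ∀ {ι : Type} [Fintype ι] (r : ℕ), 1 ≤ r →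
    ∃ F : Finset (ι → ℂ), F.card ≤ 2 ^ (a * r * Fintype.card ι) ∧
      ∀ x : ι → ℂ, ∑ i, ‖x i‖ ^ p ≤ Fintype.card ι →
        ∃ c ∈ F, ∀ i, ‖x i - c i‖ ≤ 2 * (2 ^ r)⁻¹ := by
  obtain ⟨a, ha⟩ := cover_real p hp
  refine ⟨2 * a + 1, by omega, ?_⟩
  intro ι _ r hr
  classical
  obtain ⟨F, hF, hF2⟩ := ha (ι := ι) r hr
  refine ⟨(F ×ˢ F).image (fun c i => (⟨c.1 i, c.2 i⟩ : ℂ)), ?_, ?_⟩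
  · refine Finset.card_image_le.trans ?_
    rw [Finset.card_product]
    refine (Nat.mul_le_mul hF hF).trans ?_
    rw [← pow_add]
    apply Nat.pow_le_pow_right (by norm_num)
    nlinarith [Nat.zero_le (r * Fintype.card ι)]
  · intro x hx
    obtain ⟨c, hc, hc2⟩ := hF2 (fun i => (x i).re) (le_trans (Finset.sum_le_sum fun i _ => by
      have := Complex.abs_re_le_norm (x i); gcongr) hx)
    obtain ⟨e, he, he2⟩ := hF2 (fun i => (x i).im) (le_trans (Finset.sum_le_sum fun i _ => by
      have := Complex.abs_im_le_norm (x i); gcongr) hx)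
    refine ⟨_, Finset.mem_image.mpr ⟨(c, e), Finset.mem_product.mpr ⟨hc, he⟩, rfl⟩, ?_⟩
    intro i
    refine (Complex.norm_le_abs_re_add_abs_im _).trans ?_
    have h1 := hc2 i
    have h2 := he2 i
    simp only [Complex.sub_re, Complex.sub_im]
    linarith

lemma sign_lemma (p : ℝ) (hp : 0 < p) {ι : Type*} [Fintype ι] (hn : 1 ≤ Fintype.card ι) (k : ℕ)
    (hk : 8 * k ≤ Fintype.card ι) (c : Fin (2 ^ k) → ι → ℂ) :
    ∃ e : ι → Bool, ∀ i, (Fintype.card ι : ℝ) / 4 <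
      ∑ m, ‖(if e m then (1 : ℂ) else -1) - c i m‖ ^ p := by
  classical
  by_contra! hcon
  set n := Fintype.card ι with hnn
  let v : Bool → ℂ := fun b => if b then (1 : ℂ) else -1
  have h1 : ∀ e : ι → Bool, (1 : ℝ) ≤ ∑ i, (4 : ℝ) ^ ((n : ℝ) / 4) *
      ∏ m, (1 / 4 : ℝ) ^ (‖v (e m) - c i m‖ ^ p) := by
    intro e
    obtain ⟨i, hi⟩ := hcon e
    refine le_trans ?_ (Finset.single_le_sum (f := fun i => (4 : ℝ) ^ ((n : ℝ) / 4) *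
      ∏ m, (1 / 4 : ℝ) ^ (‖v (e m) - c i m‖ ^ p)) (fun i _ => by positivity) (Finset.mem_univ i))
    rw [← Real.rpow_sum_of_pos (by norm_num), one_div, Real.inv_rpow (by norm_num),
      ← div_eq_mul_inv, one_le_div (by positivity)]
    exact Real.rpow_le_rpow_of_exponent_le (by norm_num) hi
  have h2 : ∀ z : ℂ, ∑ b, (1 / 4 : ℝ) ^ (‖v b - z‖ ^ p) ≤ 5 / 4 := by
    intro z
    have hle : ∀ w : ℂ, (1 / 4 : ℝ) ^ (‖w‖ ^ p) ≤ 1 := fun w =>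
      Real.rpow_le_one (by norm_num) (by norm_num) (by positivity)
    have hle2 : ∀ w : ℂ, 1 ≤ ‖w‖ → (1 / 4 : ℝ) ^ (‖w‖ ^ p) ≤ 1 / 4 := fun w hw => by
      have : (1:ℝ) ≤ ‖w‖ ^ p := Real.one_le_rpow hw hp.le
      calc _ ≤ (1 / 4 : ℝ) ^ (1 : ℝ) := Real.rpow_le_rpow_of_exponent_ge (by norm_num) (by norm_num) this
        _ = _ := by norm_num
    rw [Fintype.sum_bool]
    have htri : (2 : ℝ) ≤ ‖v true - z‖ + ‖v false - z‖ := by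
      have : v true - v false = (v true - z) - (v false - z) := by ring
      calc (2 : ℝ) = ‖v true - v false‖ := by simp [v]; norm_num
        _ ≤ _ := by rw [this]; exact norm_sub_le _ _
    rcases le_or_gt 1 ‖v true - z‖ with h | h
    · linarith [hle2 _ h, hle (v false - z)]
    · linarith [hle2 (v false - z) (by linarith), hle (v true - z)]
  have h3 : (2 : ℝ) ^ n ≤ 2 ^ k * ((4 : ℝ) ^ ((n : ℝ) / 4) * (5 / 4) ^ n) := by
    calc (2 : ℝ) ^ n = ∑ e : ι → Bool, (1 : ℝ) := by simp [hnn]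
      _ ≤ ∑ e : ι → Bool, ∑ i, (4 : ℝ) ^ ((n : ℝ) / 4) *
          ∏ m, (1 / 4 : ℝ) ^ (‖v (e m) - c i m‖ ^ p) := Finset.sum_le_sum fun e _ => h1 e
      _ = ∑ i, (4 : ℝ) ^ ((n : ℝ) / 4) * ∏ m, ∑ b, (1 / 4 : ℝ) ^ (‖v b - c i m‖ ^ p) := by
          rw [Finset.sum_comm]
          refine Finset.sum_congr rfl fun i _ => ?_
          rw [← Finset.mul_sum, Finset.prod_univ_sum, Fintype.piFinset_univ]
      _ ≤ ∑ i : Fin (2 ^ k), (4 : ℝ) ^ ((n : ℝ) / 4) * (5 / 4) ^ n := by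
          refine Finset.sum_le_sum fun i _ => ?_
          gcongr
          rw [hnn, ← Finset.card_univ, ← Finset.prod_const]
          exact Finset.prod_le_prod (fun m _ => Finset.sum_nonneg fun b _ => by positivity)
            (fun m _ => h2 _)
      _ = _ := by simp
  have h4 : ((2 : ℝ) ^ n) ^ 8 ≤ (2 ^ k * ((4 : ℝ) ^ ((n : ℝ) / 4) * (5 / 4) ^ n)) ^ 8 :=
    pow_le_pow_left₀ (by positivity) h3 8
  have h5 : ((4 : ℝ) ^ ((n : ℝ) / 4)) ^ 8 = 16 ^ n := by
    rw [← Real.rpow_natCast, ← Real.rpow_mul (by norm_num)]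
    rw [show (n : ℝ) / 4 * (8 : ℕ) = 2 * n by push_cast; ring, Real.rpow_mul (by norm_num),
      Real.rpow_natCast]
    norm_num
  rw [mul_pow, mul_pow, h5, ← pow_mul, ← pow_mul, ← pow_mul, mul_comm n 8, pow_mul, pow_mul _ 8 n] at h4
  have h6 : (2 : ℝ) ^ (k * 8) ≤ 2 ^ n := pow_le_pow_right₀ (by norm_num) (by omega)
  have h7 : ((2 : ℝ) ^ 8) ^ n ≤ (2 * (16 * (5 / 4) ^ 8)) ^ n := by
    refine h4.trans ?_
    rw [mul_pow, mul_pow]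
    gcongr
  have h8 : (2 * (16 * (5 / 4) ^ 8) : ℝ) ^ n < ((2 : ℝ) ^ 8) ^ n :=
    pow_lt_pow_left₀ (by norm_num) (by positivity) (by omega)
  linarith

/-- The finite set of `m` with `Q_{j,m} ⊆ Q_{ν,k}`. -/
noncomputable def cubeF (d j ν : ℕ) (k : Fin d → ℤ) : Finset (Fin d → ℤ) :=
  Fintype.piFinset (fun i => Finset.Ico (k i * 2 ^ (j - ν)) ((k i + 1) * 2 ^ (j - ν)))

/-- The `L^p` average over a dyadic cube. -/
noncomputable def avgF (p : ℝ) (d j ν : ℕ) (k : Fin d → ℤ) (x : (Fin d → ℤ) → ℂ) : ℝ :=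
  ((2 : ℝ) ^ (-((d : ℝ) * ((j : ℝ) - ν))) * ∑ m ∈ cubeF d j ν k, ‖x m‖ ^ p) ^ (1 / p)

/-- The weighted level-`j` quasi-norm. -/
noncomputable def levelNorm (d : ℕ) (σ u p : ℝ) (j : ℕ) (x : (Fin d → ℤ) → ℂ) : ℝ≥0∞ :=
  (2 : ℝ≥0∞) ^ ((j : ℝ) * (σ - d / u)) * mNorm d u p j x

lemma mem_cubeF (d j ν : ℕ) (k m : Fin d → ℤ) : m ∈ cubeF d j ν k ↔ cubeSub d j ν m k := by
  simp [cubeF, cubeSub]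

lemma mem_cubeF_zero (d j : ℕ) (m : Fin d → ℤ) : m ∈ cubeF d j 0 0 ↔ inUnitCube d j m := by
  simp [cubeF, inUnitCube]

lemma card_cubeF (d j ν : ℕ) (k : Fin d → ℤ) : (cubeF d j ν k).card = 2 ^ ((j - ν) * d) := by
  rw [cubeF, Fintype.card_piFinset]
  have : ∀ i, (Finset.Ico (k i * 2 ^ (j - ν)) ((k i + 1) * 2 ^ (j - ν))).card = 2 ^ (j - ν) := by
    intro i
    rw [Int.card_Ico]
    have : (k i + 1) * 2 ^ (j - ν) - k i * 2 ^ (j - ν) = ((2 ^ (j - ν) : ℕ) : ℤ) := by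
      push_cast; ring
    rw [this, Int.toNat_natCast]
  simp [this, pow_mul]

lemma card_cubeF_real (d j ν : ℕ) (k : Fin d → ℤ) (h : ν ≤ j) :
    ((cubeF d j ν k).card : ℝ) = (2 : ℝ) ^ ((d : ℝ) * ((j : ℝ) - ν)) := by
  rw [card_cubeF, ← Nat.cast_sub h]
  push_cast
  rw [← Real.rpow_natCast]
  congr 1
  push_cast; ring

lemma cubeF_subset (d j ν : ℕ) (k m : Fin d → ℤ) (h : ν ≤ j) (hk : inUnitCube d ν k)
    (hm : m ∈ cubeF d j ν k) : inUnitCube d j m := by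
  rw [mem_cubeF] at hm
  intro i
  have h1 := hk i
  have h2 := hm i
  have h3 : (2 : ℤ) ^ j = 2 ^ ν * 2 ^ (j - ν) := by rw [← pow_add]; congr 1; omega
  have h4 : (0 : ℤ) < 2 ^ (j - ν) := by positivity
  constructor
  · nlinarith
  · rw [h3]; nlinarith

lemma avgF_nonneg (p : ℝ) (d j ν : ℕ) (k : Fin d → ℤ) (x : (Fin d → ℤ) → ℂ) :
    0 ≤ avgF p d j ν k x := by
  unfold avgF; positivity

lemma levelNorm_eq (d : ℕ) (σ u p : ℝ) (hp : 0 < p) (j : ℕ) (x : (Fin d → ℤ) → ℂ) :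
    levelNorm d σ u p j x =
      ⨆ νk : {νk : ℕ × (Fin d → ℤ) // νk.1 ≤ j ∧ inUnitCube d νk.1 νk.2},
        ENNReal.ofReal ((2 : ℝ) ^ ((j : ℝ) * σ) * (2 : ℝ) ^ (-((νk.1.1 : ℝ) * d / u)) *
          avgF p d j νk.1.1 νk.1.2 x) := by
  unfold levelNorm mNorm
  rw [ENNReal.mul_iSup]
  congr 1
  ext νk
  obtain ⟨⟨ν, k⟩, hν, hk⟩ := νk
  dsimp only
  have h2 : ∀ t : ℝ, (2 : ℝ≥0∞) ^ t = ENNReal.ofReal ((2 : ℝ) ^ t) := by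
    intro t
    rw [← ENNReal.ofReal_rpow_of_pos (by norm_num)]
    norm_num
  have hs : (∑' m : {m : Fin d → ℤ // cubeSub d j ν m k}, ((‖x m.1‖₊ : ℝ≥0∞)) ^ p) =
      ENNReal.ofReal (∑ m ∈ cubeF d j ν k, ‖x m‖ ^ p) := by
    rw [ENNReal.ofReal_sum_of_nonneg (fun _ _ => by positivity)]
    have e : (fun m => cubeSub d j ν m k) = (fun m => m ∈ cubeF d j ν k) := by
      ext m; rw [mem_cubeF]
    have : (∑' m : {m : Fin d → ℤ // cubeSub d j ν m k}, ((‖x m.1‖₊ : ℝ≥0∞)) ^ p) =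
        (∑' m : {m : Fin d → ℤ // m ∈ cubeF d j ν k}, ((‖x m.1‖₊ : ℝ≥0∞)) ^ p) := by
      exact congrArg (fun P : (Fin d → ℤ) → Prop => ∑' m : {m : Fin d → ℤ // P m}, ((‖x m.1‖₊ : ℝ≥0∞)) ^ p) e
    rw [this, Finset.tsum_subtype (cubeF d j ν k) (fun m => ((‖x m‖₊ : ℝ≥0∞)) ^ p)]
    refine Finset.sum_congr rfl fun m _ => ?_
    rw [← ENNReal.ofReal_rpow_of_nonneg (norm_nonneg _) hp.le, ofReal_norm, enorm_eq_nnnorm]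
  have hS : 0 ≤ ∑ m ∈ cubeF d j ν k, ‖x m‖ ^ p := Finset.sum_nonneg fun _ _ => by positivity
  rw [hs, h2, h2, ENNReal.ofReal_rpow_of_nonneg hS (by positivity),
    ← ENNReal.ofReal_mul (by positivity), ← ENNReal.ofReal_mul (by positivity)]
  congr 1
  unfold avgF
  rw [Real.mul_rpow (by positivity) hS, ← Real.rpow_mul (by norm_num), ← mul_assoc, ← mul_assoc,
    ← Real.rpow_add (by norm_num), ← Real.rpow_add (by norm_num), ← Real.rpow_add (by norm_num)]
  congr 2
  ring

lemma avgF_mono (p2 p1 : ℝ) (hp2 : 0 < p2) (h21 : p2 ≤ p1) (d j ν : ℕ) (h : ν ≤ j)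
    (k : Fin d → ℤ) (x : (Fin d → ℤ) → ℂ) : avgF p2 d j ν k x ≤ avgF p1 d j ν k x := by
  have hp1 : 0 < p1 := by linarith
  set w : ℝ := (2 : ℝ) ^ (-((d : ℝ) * ((j : ℝ) - ν))) with hw
  have hw0 : 0 < w := by positivity
  have hsum : ∑ m ∈ cubeF d j ν k, w = 1 := by
    rw [Finset.sum_const, nsmul_eq_mul, card_cubeF_real d j ν k h, hw, ← Real.rpow_add (by norm_num)]
    simp
  have key := Real.rpow_arith_mean_le_arith_mean_rpow (cubeF d j ν k) (fun _ => w)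
    (fun m => ‖x m‖ ^ p2) (fun _ _ => hw0.le) hsum (fun _ _ => by positivity)
    (p := p1 / p2) (by rw [le_div_iff₀ hp2]; linarith)
  have e : ∀ m, (‖x m‖ ^ p2) ^ (p1 / p2) = ‖x m‖ ^ p1 := by
    intro m
    rw [← Real.rpow_mul (norm_nonneg _)]; congr 1; field_simp
  simp only [e] at key
  rw [← Finset.mul_sum, ← Finset.mul_sum] at key
  unfold avgF
  have hS : 0 ≤ w * ∑ m ∈ cubeF d j ν k, ‖x m‖ ^ p2 := by positivity
  have := Real.rpow_le_rpow (by positivity) key (by positivity : 0 ≤ 1 / p1)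
  rw [← Real.rpow_mul hS] at this
  rw [show p1 / p2 * (1 / p1) = 1 / p2 by field_simp] at this
  exact this

lemma levelNorm_mono (d : ℕ) (σ1 σ2 u1 u2 p1 p2 : ℝ) (hp2 : 0 < p2) (h21 : p2 ≤ p1)
    (hu : 1 / u1 ≤ 1 / u2) (j : ℕ) (x : (Fin d → ℤ) → ℂ) :
    levelNorm d σ2 u2 p2 j x ≤
      ENNReal.ofReal ((2 : ℝ) ^ (-((j : ℝ) * (σ1 - σ2)))) * levelNorm d σ1 u1 p1 j x := by
  rw [levelNorm_eq d σ2 u2 p2 hp2, levelNorm_eq d σ1 u1 p1 (by linarith)]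
  refine iSup_le fun νk => ?_
  refine le_trans ?_ (mul_le_mul_right (le_iSup _ νk) _)
  rw [← ENNReal.ofReal_mul (by positivity)]
  apply ENNReal.ofReal_le_ofReal
  have h1 := avgF_mono p2 p1 hp2 h21 d j νk.1.1 νk.2.1 νk.1.2 x
  have h0 := avgF_nonneg p2 d j νk.1.1 νk.1.2 x
  have e : (2 : ℝ) ^ (-((j : ℝ) * (σ1 - σ2))) * (2 : ℝ) ^ ((j : ℝ) * σ1) = 2 ^ ((j : ℝ) * σ2) := by
    rw [← Real.rpow_add (by norm_num)]; congr 1; ring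
  rw [← mul_assoc, ← mul_assoc, e]
  have e2 : (2 : ℝ) ^ (-((νk.1.1 : ℝ) * d / u2)) ≤ (2 : ℝ) ^ (-((νk.1.1 : ℝ) * d / u1)) := by
    apply Real.rpow_le_rpow_of_exponent_le (by norm_num)
    apply neg_le_neg
    have : (0 : ℝ) ≤ (νk.1.1 : ℝ) * d := by positivity
    rw [div_eq_mul_one_div, div_eq_mul_one_div _ u2]
    exact mul_le_mul_of_nonneg_left hu this
  gcongr

lemma levelNorm_ge (d : ℕ) (σ u p : ℝ) (hp : 0 < p) (j : ℕ) (x : (Fin d → ℤ) → ℂ) :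
    ENNReal.ofReal ((2 : ℝ) ^ ((j : ℝ) * σ) *
      ((∑ m ∈ cubeF d j 0 0, ‖x m‖ ^ p) / (cubeF d j 0 0).card) ^ (1 / p)) ≤
      levelNorm d σ u p j x := by
  rw [levelNorm_eq d σ u p hp]
  refine le_trans ?_ (le_iSup _ ⟨(0, 0), Nat.zero_le _, fun i => by simp⟩)
  apply ENNReal.ofReal_le_ofReal
  apply le_of_eq
  rw [card_cubeF_real _ _ _ _ (Nat.zero_le j)]
  simp only [avgF]
  rw [div_eq_inv_mul]
  simp
  left
  rw [Real.rpow_neg (by norm_num)]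

lemma levelNorm_le (d : ℕ) (σ u p : ℝ) (hp : 0 < p) (hu : 0 < u) (j : ℕ) (x : (Fin d → ℤ) → ℂ)
    (t : ℝ) (ht : 0 ≤ t) (h : ∀ m ∈ cubeF d j 0 0, ‖x m‖ ≤ t) :
    levelNorm d σ u p j x ≤ ENNReal.ofReal ((2 : ℝ) ^ ((j : ℝ) * σ) * t) := by
  rw [levelNorm_eq d σ u p hp]
  refine iSup_le fun νk => ?_
  obtain ⟨⟨ν, k⟩, hν, hk⟩ := νk
  dsimp only at *
  apply ENNReal.ofReal_le_ofReal
  have h1 : avgF p d j ν k x ≤ t := by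
    unfold avgF
    have hs : ∑ m ∈ cubeF d j ν k, ‖x m‖ ^ p ≤ (2 : ℝ) ^ ((d : ℝ) * ((j : ℝ) - ν)) * t ^ p := by
      rw [← card_cubeF_real d j ν k hν, ← nsmul_eq_mul]
      apply Finset.sum_le_card_nsmul
      intro m hm
      have := h m ((mem_cubeF_zero d j m).mpr (cubeF_subset d j ν k m hν hk hm))
      gcongr
    calc _ ≤ ((2 : ℝ) ^ (-((d : ℝ) * ((j : ℝ) - ν))) *
          ((2 : ℝ) ^ ((d : ℝ) * ((j : ℝ) - ν)) * t ^ p)) ^ (1 / p) := by gcongr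
      _ = t := by
        rw [← mul_assoc, ← Real.rpow_add (by norm_num), neg_add_cancel, Real.rpow_zero, one_mul,
          ← Real.rpow_mul ht, mul_one_div_cancel hp.ne', Real.rpow_one]
  have h2 : (2 : ℝ) ^ (-((ν : ℝ) * d / u)) ≤ 1 :=
    Real.rpow_le_one_of_one_le_of_nonpos (by norm_num) (by
      have : 0 ≤ (ν : ℝ) * d / u := by positivity
      linarith)
  have h0 := avgF_nonneg p d j ν k x
  calc _ ≤ (2 : ℝ) ^ ((j : ℝ) * σ) * 1 * t := by gcongr
    _ = _ := by ring

lemma level_le_nNorm (d : ℕ) (σ u p : ℝ) (q : ℝ≥0∞) (hq : 0 < q)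
    (x : ℕ → (Fin d → ℤ) → ℂ) (j : ℕ) : levelNorm d σ u p j (x j) ≤ nNorm d σ u p q x := by
  unfold nNorm
  split_ifs with h
  · exact le_iSup (fun j => levelNorm d σ u p j (x j)) j
  · have hq' : 0 < q.toReal := ENNReal.toReal_pos hq.ne' h
    have := ENNReal.le_tsum (f := fun j => (levelNorm d σ u p j (x j)) ^ q.toReal) j
    calc levelNorm d σ u p j (x j) = ((levelNorm d σ u p j (x j)) ^ q.toReal) ^ (1 / q.toReal) := by
          rw [← ENNReal.rpow_mul, mul_one_div_cancel hq'.ne', ENNReal.rpow_one]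
      _ ≤ _ := ENNReal.rpow_le_rpow this (by positivity)

lemma nNorm_single_le (d : ℕ) (σ u p : ℝ) (q : ℝ≥0∞) (hq : 0 < q)
    (x : ℕ → (Fin d → ℤ) → ℂ) (j0 : ℕ) (h0 : ∀ j, j ≠ j0 → levelNorm d σ u p j (x j) = 0)
    (h1 : levelNorm d σ u p j0 (x j0) ≤ 1) : nNorm d σ u p q x ≤ 1 := by
  unfold nNorm
  split_ifs with h
  · refine iSup_le fun j => ?_
    by_cases hj : j = j0
    · subst hj; exact h1
    · exact (h0 j hj).le.trans zero_le_one
  · have hq' : 0 < q.toReal := ENNReal.toReal_pos hq.ne' h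
    have : (∑' j, (levelNorm d σ u p j (x j)) ^ q.toReal) = (levelNorm d σ u p j0 (x j0)) ^ q.toReal := by
      apply tsum_eq_single
      intro j hj
      rw [h0 j hj, ENNReal.zero_rpow_of_pos hq']
    calc _ = (∑' j, (levelNorm d σ u p j (x j)) ^ q.toReal) ^ (1 / q.toReal) := rfl
      _ = levelNorm d σ u p j0 (x j0) := by
          rw [this, ← ENNReal.rpow_mul, mul_one_div_cancel hq'.ne', ENNReal.rpow_one]
      _ ≤ 1 := h1

lemma aux_split (J : ℕ) (f g : ℕ → ℝ≥0∞) (h1 : ∀ j, j < J → g j ≤ f (J - 1 - j))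
    (h2 : ∀ i, g (i + J) ≤ f i) : ∑' j, g j ≤ ∑' i, f i + ∑' i, f i := by
  rw [← Summable.sum_add_tsum_nat_add' (f := g) (k := J) ENNReal.summable]
  refine add_le_add ?_ (ENNReal.tsum_le_tsum h2)
  calc ∑ j ∈ Finset.range J, g j ≤ ∑ j ∈ Finset.range J, f (J - 1 - j) :=
        Finset.sum_le_sum fun j hj => h1 j (Finset.mem_range.mp hj)
    _ = ∑ j ∈ Finset.range J, f j := Finset.sum_range_reflect f J
    _ ≤ _ := ENNReal.sum_le_tsum _

lemma aux_geom (s : ℝ) (hs : 0 < s) : ∃ C : ℝ, 0 ≤ C ∧ ∀ J : ℕ,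
    ∑' j : ℕ, ENNReal.ofReal ((2 : ℝ) ^ (-(s * |(J : ℝ) - j|))) ≤ ENNReal.ofReal C := by
  have hr0 : (0 : ℝ) ≤ (2 : ℝ) ^ (-s) := by positivity
  have hr1 : (2 : ℝ) ^ (-s) < 1 := Real.rpow_lt_one_of_one_lt_of_neg (by norm_num) (by linarith)
  have hpow : ∀ i : ℕ, (2 : ℝ) ^ (-(s * (i : ℝ))) = ((2 : ℝ) ^ (-s)) ^ i := by
    intro i
    rw [← Real.rpow_natCast, ← Real.rpow_mul (by norm_num)]; congr 1; ring
  set G : ℝ := ∑' i : ℕ, ((2 : ℝ) ^ (-s)) ^ i with hG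
  have hG0 : 0 ≤ G := tsum_nonneg fun i => by positivity
  have hg : ∑' i : ℕ, ENNReal.ofReal ((2 : ℝ) ^ (-(s * (i : ℝ)))) = ENNReal.ofReal G := by
    rw [hG, ENNReal.ofReal_tsum_of_nonneg (fun i => by positivity)
      (summable_geometric_of_lt_one hr0 hr1)]
    simp only [hpow]
  refine ⟨G + G, by positivity, fun J => ?_⟩
  rw [ENNReal.ofReal_add hG0 hG0, ← hg]
  apply aux_split J
  · intro j hj
    apply ENNReal.ofReal_le_ofReal
    have e : ((J - 1 - j : ℕ) : ℝ) = J - 1 - j := by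
      rw [Nat.sub_sub, Nat.cast_sub (by omega)]; push_cast; ring
    have hj2 : (j : ℝ) ≤ J := by exact_mod_cast hj.le
    rw [e, abs_of_nonneg (by linarith)]
    apply Real.rpow_le_rpow_of_exponent_le (by norm_num)
    nlinarith
  · intro i
    have e : |(J : ℝ) - ((i + J : ℕ) : ℝ)| = i := by
      push_cast
      rw [abs_of_nonpos (by linarith [(Nat.cast_nonneg i : (0:ℝ) ≤ i)])]
      ring
    rw [e]

lemma nNorm_le_of_decay (s' : ℝ) (hs : 0 < s') (q : ℝ≥0∞) (hq : 0 < q) : ∃ C : ℝ, 0 < C ∧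
    ∀ (d : ℕ) (σ u p : ℝ) (x : ℕ → (Fin d → ℤ) → ℂ) (J : ℕ) (D : ℝ), 0 ≤ D →
    (∀ j : ℕ, levelNorm d σ u p j (x j) ≤ ENNReal.ofReal (D * (2 : ℝ) ^ (-(s' * |(J : ℝ) - j|)))) →
    nNorm d σ u p q x ≤ ENNReal.ofReal (C * D) := by
  by_cases h : q = ∞
  · refine ⟨1, one_pos, ?_⟩
    intro d σ u p x J D hD hx
    unfold nNorm
    rw [if_pos h]
    refine iSup_le fun j => (hx j).trans (ENNReal.ofReal_le_ofReal ?_)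
    rw [mul_comm]
    gcongr
    apply Real.rpow_le_one_of_one_le_of_nonpos (by norm_num)
    have : 0 ≤ s' * |(J : ℝ) - j| := by positivity
    linarith
  · have hq' : 0 < q.toReal := ENNReal.toReal_pos hq.ne' h
    set r := q.toReal
    obtain ⟨C, hC, hC2⟩ := aux_geom (s' * r) (by positivity)
    refine ⟨C ^ (1 / r) + 1, by positivity, ?_⟩
    intro d σ u p x J D hD hx
    unfold nNorm
    rw [if_neg h]
    have h1 : (∑' j, (levelNorm d σ u p j (x j)) ^ r) ≤ ENNReal.ofReal (D ^ r) * ENNReal.ofReal C := by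
      refine le_trans ?_ (mul_le_mul_right (hC2 J) _)
      rw [← ENNReal.tsum_mul_left]
      refine ENNReal.tsum_le_tsum fun j => ?_
      refine (ENNReal.rpow_le_rpow (hx j) hq'.le).trans ?_
      rw [ENNReal.ofReal_rpow_of_nonneg (by positivity) hq'.le, ← ENNReal.ofReal_mul (by positivity)]
      apply ENNReal.ofReal_le_ofReal
      apply le_of_eq
      rw [Real.mul_rpow hD (by positivity), ← Real.rpow_mul (by norm_num)]
      congr 2
      ring
    calc _ = (∑' j, (levelNorm d σ u p j (x j)) ^ r) ^ (1 / r) := rfl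
      _ ≤ (ENNReal.ofReal (D ^ r) * ENNReal.ofReal C) ^ (1 / r) := ENNReal.rpow_le_rpow h1 (by positivity)
      _ = ENNReal.ofReal (D * C ^ (1 / r)) := by
        rw [← ENNReal.ofReal_mul (by positivity), ENNReal.ofReal_rpow_of_nonneg (by positivity) (by positivity),
          Real.mul_rpow (by positivity) hC, ← Real.rpow_mul hD, mul_one_div_cancel hq'.ne', Real.rpow_one]
      _ ≤ _ := ENNReal.ofReal_le_ofReal (by nlinarith)

lemma lower_aux (d : ℕ) (σ1 σ2 u1 p1 u2 p2 : ℝ) (q1 q2 : ℝ≥0∞)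
    (hq1 : 0 < q1) (hq2 : 0 < q2) (hp1 : 0 < p1) (hu1 : 0 < u1) (hp2 : 0 < p2)
    (k j : ℕ) (hkj : 8 * (k - 1) ≤ 2 ^ (j * d)) :
    ENNReal.ofReal ((2 : ℝ) ^ (-((j : ℝ) * (σ1 - σ2))) * (1 / 4) ^ (1 / p2)) ≤
      entropyNumber (nNorm d σ1 u1 p1 q1) (nNorm d σ2 u2 p2 q2) k := by
  classical
  unfold entropyNumber
  refine le_sInf ?_
  rintro ε ⟨hε, c, hc⟩
  set U := cubeF d j 0 0 with hU
  have hcard : Fintype.card U = 2 ^ (j * d) := by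
    rw [Fintype.card_coe, hU, card_cubeF]; simp
  set a : ℝ := (2 : ℝ) ^ ((j : ℝ) * σ1) with ha
  have ha0 : 0 < a := by positivity
  obtain ⟨e, he⟩ := sign_lemma p2 hp2 (ι := U) (by rw [hcard]; exact Nat.one_le_two_pow) (k - 1)
    (by rw [hcard]; exact hkj) (fun i m => (a : ℂ) * c i j m.1)
  let x : ℕ → (Fin d → ℤ) → ℂ := fun j' m =>
    if j' = j then (if hm : m ∈ U then ((a⁻¹ : ℝ) : ℂ) * (if e ⟨m, hm⟩ then (1 : ℂ) else -1) else 0)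
    else 0
  have hx : nNorm d σ1 u1 p1 q1 x ≤ 1 := by
    apply nNorm_single_le d σ1 u1 p1 q1 hq1 x j
    · intro j' hj'
      have := levelNorm_le d σ1 u1 p1 hp1 hu1 j' (x j') 0 le_rfl (fun m _ => by simp [x, hj'])
      simpa using this
    · refine (levelNorm_le d σ1 u1 p1 hp1 hu1 j (x j) a⁻¹ (by positivity) ?_).trans ?_
      · intro m hm
        have hm' : m ∈ U := hm
        simp only [x, if_true, hm', dif_pos]
        rw [norm_mul, Complex.norm_real, Real.norm_of_nonneg (by positivity)]
        split_ifs <;> simp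
      · rw [← ha, mul_inv_cancel₀ ha0.ne']; simp
  obtain ⟨i, hi⟩ := hc x hx
  refine le_trans ?_ hi
  refine le_trans ?_ (level_le_nNorm d σ2 u2 p2 q2 hq2 (x - c i) j)
  refine le_trans ?_ (levelNorm_ge d σ2 u2 p2 hp2 j _)
  apply ENNReal.ofReal_le_ofReal
  have hs := he i
  have hsum : ∑ m ∈ cubeF d j 0 0, ‖(x - c i) j m‖ ^ p2 =
      (a⁻¹) ^ p2 * ∑ m : U, ‖(if e m then (1 : ℂ) else -1) - (a : ℂ) * c i j m.1‖ ^ p2 := by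
    rw [Finset.mul_sum, ← hU, ← Finset.sum_coe_sort]
    refine Finset.sum_congr rfl fun m _ => ?_
    rw [← Real.mul_rpow (by positivity) (by positivity)]
    congr 1
    have hac : (a : ℂ) ≠ 0 := by exact_mod_cast ha0.ne'
    have : (x - c i) j m = ((a⁻¹ : ℝ) : ℂ) * ((if e m then (1 : ℂ) else -1) - (a : ℂ) * c i j m.1) := by
      simp only [Pi.sub_apply, x, if_true, m.2, dif_pos]
      push_cast
      field_simp
    rw [this, norm_mul, Complex.norm_real, Real.norm_of_nonneg (by positivity)]
  rw [hsum]
  set S := ∑ m : U, ‖(if e m then (1 : ℂ) else -1) - (a : ℂ) * c i j m.1‖ ^ p2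
  have hn0 : (0 : ℝ) < (Fintype.card U : ℝ) := by rw [hcard]; positivity
  have hn1 : ((cubeF d j 0 0).card : ℝ) = (Fintype.card U : ℝ) := by rw [Fintype.card_coe]
  rw [hn1, mul_div_assoc, Real.mul_rpow (by positivity) (by positivity), ← Real.rpow_mul (by positivity),
    mul_one_div_cancel hp2.ne', Real.rpow_one, ← mul_assoc]
  have e1 : (2 : ℝ) ^ ((j : ℝ) * σ2) * a⁻¹ = (2 : ℝ) ^ (-((j : ℝ) * (σ1 - σ2))) := by
    rw [ha, ← Real.rpow_neg (by norm_num), ← Real.rpow_add (by norm_num)]; congr 1; ring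
  rw [e1]
  have : 1 / 4 ≤ S / (Fintype.card U : ℝ) := by
    rw [le_div_iff₀ hn0]; linarith
  gcongr

lemma lower_main (d : ℕ) (hd : 1 ≤ d) (σ1 σ2 u1 p1 u2 p2 : ℝ) (q1 q2 : ℝ≥0∞)
    (hq1 : 0 < q1) (hq2 : 0 < q2) (hp1 : 0 < p1) (hu1 : 0 < u1) (hp2 : 0 < p2)
    (hs : 0 < σ1 - σ2) :
    ∃ c1 : ℝ, 0 < c1 ∧ ∀ k : ℕ, 0 < k →
      ENNReal.ofReal (c1 * (k : ℝ) ^ (-(σ1 - σ2) / d)) ≤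
          entropyNumber (nNorm d σ1 u1 p1 q1) (nNorm d σ2 u2 p2 q2) k := by
  have hd0 : (0 : ℝ) < d := by exact_mod_cast hd
  refine ⟨((2 : ℝ) ^ d * 8) ^ (-(σ1 - σ2) / d) * (1 / 4) ^ (1 / p2), by positivity, ?_⟩
  intro k hk
  have hb : 1 < 2 ^ d := Nat.one_lt_two_pow (by omega)
  set j := Nat.clog (2 ^ d) (8 * k) with hj
  have h1 : 8 * k ≤ (2 ^ d) ^ j := Nat.le_pow_clog hb _
  have h2 : (2 ^ d) ^ j ≤ 2 ^ d * (8 * k) := by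
    have h3 : (2 ^ d) ^ (j - 1) < 8 * k := Nat.pow_pred_clog_lt_self hb (by omega)
    have hj1 : 0 < j := Nat.clog_pos hb (by omega)
    calc (2 ^ d) ^ j = 2 ^ d * (2 ^ d) ^ (j - 1) := by rw [← pow_succ']; congr 1; omega
      _ ≤ _ := Nat.mul_le_mul_left _ h3.le
  refine le_trans ?_ (lower_aux d σ1 σ2 u1 p1 u2 p2 q1 q2 hq1 hq2 hp1 hu1 hp2 k j
    (by rw [mul_comm j d, pow_mul]; omega))
  apply ENNReal.ofReal_le_ofReal
  have h4 : ((2 : ℝ) ^ d) ^ j ≤ (2 : ℝ) ^ d * 8 * k := by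
    rw [mul_assoc]; exact_mod_cast h2
  have h5 : (2 : ℝ) ^ (-((j : ℝ) * (σ1 - σ2))) = (((2 : ℝ) ^ d) ^ j) ^ (-(σ1 - σ2) / d) := by
    rw [← pow_mul, ← Real.rpow_natCast, ← Real.rpow_mul (by norm_num)]
    congr 1
    push_cast
    field_simp
  rw [h5, mul_right_comm, ← Real.mul_rpow (by positivity) (by positivity)]
  gcongr ?_ * _
  apply Real.rpow_le_rpow_of_nonpos (by positivity) h4
  rw [neg_div]
  have : 0 < (σ1 - σ2) / d := by positivity
  linarith

lemma exists_fin_cover {α Λ : Type*} [Inhabited Λ] (S : Finset α) (f : α → Λ) (N : ℕ) (hN : S.card ≤ N) :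
    ∃ c : Fin N → Λ, ∀ s ∈ S, ∃ i, c i = f s := by
  refine ⟨fun i => if h : i.1 < S.card then f (S.equivFin.symm ⟨i.1, h⟩).1 else default, ?_⟩
  intro s hs
  have hlt := (S.equivFin ⟨s, hs⟩).2
  refine ⟨⟨(S.equivFin ⟨s, hs⟩).1, by omega⟩, ?_⟩
  simp

lemma bits_bound (d : ℕ) (hd : 1 ≤ d) (J : ℕ) :
    ∑ j ∈ Finset.range J, (J - j) * 2 ^ (j * d) ≤ 2 * 2 ^ (J * d) := by
  have hb : 2 ≤ 2 ^ d := by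
    calc 2 = 2 ^ 1 := rfl
      _ ≤ 2 ^ d := Nat.pow_le_pow_right (by norm_num) hd
  have hgeo : ∀ J : ℕ, ∑ j ∈ Finset.range J, 2 ^ (j * d) ≤ 2 ^ (J * d) := by
    intro J
    induction J with
    | zero => simp
    | succ J ih =>
      rw [Finset.sum_range_succ, Nat.succ_mul, pow_add]
      nlinarith [Nat.zero_le (2 ^ (J * d))]
  induction J with
  | zero => simp
  | succ J ih =>
    have : ∑ j ∈ Finset.range (J + 1), (J + 1 - j) * 2 ^ (j * d) =
        ∑ j ∈ Finset.range J, (J - j) * 2 ^ (j * d) + ∑ j ∈ Finset.range (J + 1), 2 ^ (j * d) := by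
      rw [Finset.sum_range_succ, Finset.sum_range_succ _ J, ← add_assoc, ← Finset.sum_add_distrib]
      congr 1
      · refine Finset.sum_congr rfl fun j hj => ?_
        have := Finset.mem_range.mp hj
        rw [show J + 1 - j = (J - j) + 1 by omega]; ring
      · simp
    rw [this, Finset.sum_range_succ, Nat.succ_mul J d, pow_add]
    have := hgeo J
    nlinarith [Nat.zero_le (2 ^ (J * d))]

lemma upper_aux (d : ℕ) (σ1 σ2 u1 p1 u2 p2 : ℝ) (q1 q2 : ℝ≥0∞)
    (hq1 : 0 < q1) (hq2 : 0 < q2) (hp1 : 0 < p1) (hu2 : 0 < u2) (hp2 : 0 < p2)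
    (h21 : p2 ≤ p1) (hu : 1 / u1 ≤ 1 / u2) (hs : 0 < σ1 - σ2) :
    ∃ (b : ℕ) (C : ℝ), 1 ≤ b ∧ 0 < C ∧ ∀ k J : ℕ,
      b * (∑ j ∈ Finset.range J, (J - j) * 2 ^ (j * d)) ≤ k - 1 →
      entropyNumber (nNorm d σ1 u1 p1 q1) (nNorm d σ2 u2 p2 q2) k ≤
        ENNReal.ofReal (C * (2 : ℝ) ^ (-((J : ℝ) * (σ1 - σ2)))) := by
  classical
  set s := σ1 - σ2 with hsdef
  obtain ⟨a, ha1, ha⟩ := cover_complex p1 hp1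
  obtain ⟨C, hC, hC2⟩ := nNorm_le_of_decay s hs q2 hq2
  obtain ⟨K, hK⟩ := exists_nat_gt (2 * s)
  have hK1 : 1 ≤ K := by
    by_contra h
    have : K = 0 := by omega
    rw [this] at hK; push_cast at hK; linarith
  refine ⟨a * K, C * 2, Nat.mul_pos ha1 hK1, by positivity, ?_⟩
  intro k J hkJ
  have hex : ∀ j : Fin J, ∃ F : Finset ((cubeF d j 0 0) → ℂ),
      F.card ≤ 2 ^ (a * (K * (J - j)) * Fintype.card (cubeF d j 0 0)) ∧
      ∀ x : (cubeF d j 0 0) → ℂ, ∑ i, ‖x i‖ ^ p1 ≤ Fintype.card (cubeF d j 0 0) →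
        ∃ c ∈ F, ∀ i, ‖x i - c i‖ ≤ 2 * (2 ^ (K * (J - j)))⁻¹ := fun j =>
    ha (ι := (cubeF d j 0 0)) (K * (J - j)) (Nat.mul_pos hK1 (by have := j.2; omega))
  choose F hF hF2 using hex
  let P := Fintype.piFinset F
  have hPcard : P.card ≤ 2 ^ (k - 1) := by
    rw [Fintype.card_piFinset]
    calc ∏ j, (F j).card ≤ ∏ j : Fin J, 2 ^ (a * (K * (J - j)) * Fintype.card (cubeF d j 0 0)) :=
          Finset.prod_le_prod' fun j _ => hF j
      _ = 2 ^ (∑ j : Fin J, (a * (K * (J - j)) * Fintype.card (cubeF d j 0 0))) := by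
          rw [Finset.prod_pow_eq_pow_sum]
      _ ≤ 2 ^ (k - 1) := by
          apply Nat.pow_le_pow_right (by norm_num)
          refine le_trans (le_of_eq ?_) hkJ
          rw [Finset.mul_sum, Finset.sum_range]
          refine Finset.sum_congr rfl fun j _ => ?_
          rw [Fintype.card_coe, card_cubeF, Nat.sub_zero]
          ring
  let ctr : ((j : Fin J) → (cubeF d j 0 0) → ℂ) → (ℕ → (Fin d → ℤ) → ℂ) := fun g j m =>
    if h : j < J then
      (if hm : m ∈ cubeF d j 0 0 then (((2 : ℝ) ^ (-((j : ℝ) * σ1)) : ℝ) : ℂ) * g ⟨j, h⟩ ⟨m, hm⟩ else 0)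
    else 0
  obtain ⟨c, hc⟩ := exists_fin_cover P ctr (2 ^ (k - 1)) hPcard
  apply sInf_le
  refine ⟨by rw [ENNReal.ofReal_pos]; positivity, c, ?_⟩
  intro x hx
  have hlev : ∀ j, levelNorm d σ1 u1 p1 j (x j) ≤ 1 := fun j =>
    (level_le_nNorm d σ1 u1 p1 q1 hq1 x j).trans hx
  have hg : ∀ j : Fin J, ∃ g ∈ F j, ∀ m : (cubeF d j 0 0),
      ‖(((2 : ℝ) ^ ((j : ℝ) * σ1) : ℝ) : ℂ) * x j m - g m‖ ≤ 2 * (2 ^ (K * (J - j)))⁻¹ := by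
    intro j
    apply hF2 j (fun m => (((2 : ℝ) ^ ((j : ℝ) * σ1) : ℝ) : ℂ) * x j m)
    have h1 := (levelNorm_ge d σ1 u1 p1 hp1 j (x j)).trans (hlev j)
    rw [ENNReal.ofReal_le_one] at h1
    set A : ℝ := (2 : ℝ) ^ (((j : ℕ) : ℝ) * σ1) with hA
    have hA0 : 0 < A := by positivity
    clear_value A
    have e : ∑ m : (cubeF d j 0 0), ‖(A : ℂ) * x j m‖ ^ p1 =
        A ^ p1 * ∑ m ∈ cubeF d j 0 0, ‖x j m‖ ^ p1 := by
      rw [Finset.mul_sum, ← Finset.sum_coe_sort (cubeF d j 0 0)]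
      refine Finset.sum_congr rfl fun m _ => ?_
      rw [norm_mul, Complex.norm_real, Real.norm_of_nonneg hA0.le, Real.mul_rpow hA0.le (norm_nonneg _)]
    rw [e, Fintype.card_coe]
    have hcp : (0 : ℝ) < (cubeF d j 0 0).card := by rw [card_cubeF]; positivity
    have h2 := Real.rpow_le_rpow (by positivity) h1 hp1.le
    rw [Real.one_rpow, Real.mul_rpow hA0.le (by positivity), ← Real.rpow_mul (by positivity),
      one_div_mul_cancel hp1.ne', Real.rpow_one, ← mul_div_assoc, div_le_one hcp] at h2
    exact h2
  choose g hgF hg2 using hg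
  obtain ⟨i, hi⟩ := hc g (Fintype.mem_piFinset.mpr hgF)
  refine ⟨i, ?_⟩
  rw [hi, mul_assoc]
  apply hC2 d σ2 u2 p2 (x - ctr g) J _ (by positivity)
  intro j
  by_cases hj : j < J
  · have hjr : (j : ℝ) ≤ J := by exact_mod_cast hj.le
    refine (levelNorm_le d σ2 u2 p2 hp2 hu2 j _
      ((2 : ℝ) ^ (-((j : ℝ) * σ1)) * (2 * (2 ^ (K * (J - j)))⁻¹)) (by positivity) ?_).trans ?_
    · intro m hm
      have h1 := hg2 ⟨j, hj⟩ ⟨m, hm⟩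
      dsimp only at h1
      have e : (x - ctr g) j m = (((2 : ℝ) ^ (-((j : ℝ) * σ1)) : ℝ) : ℂ) *
          ((((2 : ℝ) ^ ((j : ℝ) * σ1) : ℝ) : ℂ) * x j m - g ⟨j, hj⟩ ⟨m, hm⟩) := by
        simp only [Pi.sub_apply, ctr, hj, hm, dif_pos]
        rw [mul_sub, ← mul_assoc, ← Complex.ofReal_mul, ← Real.rpow_add (by norm_num), neg_add_cancel,
          Real.rpow_zero]
        simp
      rw [e, norm_mul, Complex.norm_real, Real.norm_of_nonneg (by positivity)]
      gcongr
    · apply ENNReal.ofReal_le_ofReal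
      rw [abs_of_nonneg (by linarith)]
      have e1 : ((2 : ℝ) ^ (K * (J - j)))⁻¹ = (2 : ℝ) ^ (-((K : ℝ) * (J - j))) := by
        rw [Real.rpow_neg (by norm_num), ← Nat.cast_sub hj.le, ← Nat.cast_mul, Real.rpow_natCast]
      rw [e1]
      have e2 : (2 : ℝ) ^ ((j : ℝ) * σ2) * ((2 : ℝ) ^ (-((j : ℝ) * σ1)) *
          (2 * (2 : ℝ) ^ (-((K : ℝ) * (J - j))))) =
          2 * (2 : ℝ) ^ ((j : ℝ) * σ2 + -((j : ℝ) * σ1) + -((K : ℝ) * (J - j))) := by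
        rw [Real.rpow_add (by norm_num), Real.rpow_add (by norm_num)]; ring
      rw [e2, mul_assoc, ← Real.rpow_add (by norm_num)]
      refine mul_le_mul_of_nonneg_left (Real.rpow_le_rpow_of_exponent_le (by norm_num) ?_) (by norm_num)
      · have : 0 ≤ ((K : ℝ) - 2 * s) * (J - j) := mul_nonneg (by linarith) (by linarith)
        have h3 : σ1 = s + σ2 := by rw [hsdef]; ring
        rw [h3]
        nlinarith
  · have hjr : (J : ℝ) ≤ j := by exact_mod_cast (not_lt.mp hj)
    have e : (x - ctr g) j = x j := by
      ext m; simp [ctr, hj]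
    rw [e]
    refine (levelNorm_mono d σ1 σ2 u1 u2 p1 p2 hp2 h21 hu j (x j)).trans ?_
    refine (mul_le_mul_right (hlev j) _).trans ?_
    rw [mul_one]
    apply ENNReal.ofReal_le_ofReal
    rw [abs_of_nonpos (by linarith), mul_assoc, ← Real.rpow_add (by norm_num)]
    have e3 : -((J : ℝ) * s) + -(s * -((J : ℝ) - j)) = -((j : ℝ) * s) := by ring
    rw [e3, ← hsdef]
    have : 0 < (2 : ℝ) ^ (-((j : ℝ) * s)) := by positivity
    linarith

lemma upper_main (d : ℕ) (hd : 1 ≤ d) (σ1 σ2 u1 p1 u2 p2 : ℝ) (q1 q2 : ℝ≥0∞)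
    (hq1 : 0 < q1) (hq2 : 0 < q2) (hp1 : 0 < p1) (hu2 : 0 < u2) (hp2 : 0 < p2)
    (h21 : p2 ≤ p1) (hu : 1 / u1 ≤ 1 / u2) (hs : 0 < σ1 - σ2) :
    ∃ c2 : ℝ, 0 < c2 ∧ ∀ k : ℕ, 0 < k →
      entropyNumber (nNorm d σ1 u1 p1 q1) (nNorm d σ2 u2 p2 q2) k ≤
      ENNReal.ofReal (c2 * (k : ℝ) ^ (-(σ1 - σ2) / d)) := by
  have hd0 : (0 : ℝ) < d := by exact_mod_cast hd
  obtain ⟨b, C, hb, hC, hmain⟩ := upper_aux d σ1 σ2 u1 p1 u2 p2 q1 q2 hq1 hq2 hp1 hu2 hp2 h21 hu hs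
  set B : ℕ → ℕ := fun J => b * (∑ j ∈ Finset.range J, (J - j) * 2 ^ (j * d)) with hB
  have hb0 : (0 : ℝ) < b := by exact_mod_cast hb
  refine ⟨C * ((b * 2 * 2 ^ d : ℝ)⁻¹) ^ (-(σ1 - σ2) / d), by positivity, ?_⟩
  intro k hk
  have hex : ∃ J, k ≤ B J := by
    refine ⟨k, ?_⟩
    have h1 : k ≤ ∑ j ∈ Finset.range k, (k - j) * 2 ^ (j * d) := by
      have := Finset.single_le_sum (f := fun j => (k - j) * 2 ^ (j * d)) (fun _ _ => Nat.zero_le _)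
        (Finset.mem_range.mpr hk)
      simpa using this
    exact h1.trans (Nat.le_mul_of_pos_left _ hb)
  classical
  have hspec := Nat.find_spec hex
  have hJ0 : Nat.find hex ≠ 0 := by
    intro h
    rw [h] at hspec
    simp [hB] at hspec
    omega
  obtain ⟨J, hJ⟩ := Nat.exists_eq_succ_of_ne_zero hJ0
  have hlt : ¬ k ≤ B J := Nat.find_min hex (by omega)
  rw [hJ] at hspec
  have hk2 : k ≤ b * 2 * 2 ^ d * (2 ^ d) ^ J := by
    have h3 := Nat.mul_le_mul_left b (bits_bound d hd (J + 1))
    refine hspec.trans (h3.trans (le_of_eq ?_))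
    rw [← pow_mul, Nat.succ_mul J d, pow_add, mul_comm J d]; ring
  refine (hmain k J (by show B J ≤ k - 1; omega)).trans ?_
  apply ENNReal.ofReal_le_ofReal
  have h5 : (2 : ℝ) ^ (-((J : ℝ) * (σ1 - σ2))) = (((2 : ℝ) ^ d) ^ J) ^ (-(σ1 - σ2) / d) := by
    rw [← pow_mul, ← Real.rpow_natCast, ← Real.rpow_mul (by norm_num)]
    congr 1
    push_cast
    field_simp
  rw [h5, mul_assoc, ← Real.mul_rpow (by positivity) (by positivity)]
  gcongr C * ?_
  have hk0 : (0 : ℝ) < k := by exact_mod_cast hk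
  apply Real.rpow_le_rpow_of_nonpos (by positivity)
  · rw [inv_mul_le_iff₀ (by positivity)]
    exact_mod_cast hk2
  · rw [neg_div]
    have : 0 < (σ1 - σ2) / d := by positivity
    linarith

theorem stmt0 (d : ℕ) (hd : 1 ≤ d) (σ1 σ2 u1 p1 u2 p2 : ℝ) (q1 q2 : ℝ≥0∞)
    (hq1 : 0 < q1) (hq2 : 0 < q2)
    (hp1 : 0 < p1) (hp1u1 : p1 ≤ u1) (hp2 : 0 < p2) (hp2u2 : p2 ≤ u2)
    (hmax : max (max 0 (1 / u1 - 1 / u2)) (p1 / u1 * (1 / p1 - 1 / p2)) = 0)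
    (hσ : (σ1 - σ2) / d > max (max 0 (1 / u1 - 1 / u2)) (p1 / u1 * (1 / p1 - 1 / p2))) :
    ∃ c1 c2 : ℝ, 0 < c1 ∧ 0 < c2 ∧ ∀ k : ℕ, 0 < k →
      ENNReal.ofReal (c1 * (k : ℝ) ^ (-(σ1 - σ2) / d)) ≤
          entropyNumber (nNorm d σ1 u1 p1 q1) (nNorm d σ2 u2 p2 q2) k ∧
        entropyNumber (nNorm d σ1 u1 p1 q1) (nNorm d σ2 u2 p2 q2) k ≤
          ENNReal.ofReal (c2 * (k : ℝ) ^ (-(σ1 - σ2) / d)) := by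
  have hd0 : (0 : ℝ) < d := by exact_mod_cast hd
  have hu1 : 0 < u1 := by linarith
  have hu2 : 0 < u2 := by linarith
  rw [hmax] at hσ
  have hs : 0 < σ1 - σ2 := by
    by_contra h
    have : (σ1 - σ2) / d ≤ 0 := div_nonpos_of_nonpos_of_nonneg (not_lt.mp h) hd0.le
    linarith
  have hu : 1 / u1 ≤ 1 / u2 := by
    have h1 := (le_max_right 0 (1 / u1 - 1 / u2)).trans (le_max_left _ (p1 / u1 * (1 / p1 - 1 / p2)))
    rw [hmax] at h1
    linarith
  have h21 : p2 ≤ p1 := by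
    have h1 := le_max_right (max 0 (1 / u1 - 1 / u2)) (p1 / u1 * (1 / p1 - 1 / p2))
    rw [hmax] at h1
    have h2 : 0 < p1 / u1 := by positivity
    have h3 : 1 / p1 ≤ 1 / p2 := by
      by_contra h
      have := mul_pos h2 (sub_pos.mpr (not_le.mp h))
      linarith
    exact (one_div_le_one_div hp1 hp2).mp h3
  obtain ⟨c1, hc1, h1⟩ := lower_main d hd σ1 σ2 u1 p1 u2 p2 q1 q2 hq1 hq2 hp1 hu1 hp2 hs
  obtain ⟨c2, hc2, h2⟩ := upper_main d hd σ1 σ2 u1 p1 u2 p2 q1 q2 hq1 hq2 hp1 hu2 hp2 h21 hu hs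
  exact ⟨c1, c2, hc1, hc2, fun k hk => ⟨h1 k hk, h2 k hk⟩⟩
end

section
/- Let d ≥ 1 be an integer, σ1, σ2 ∈ ℝ, 0 < q_i ≤ ∞ and 0 < p_i ≤ u_i < ∞ for i = 1, 2. Assume that (σ1 − σ2)/d > (p1/u1)(1/p1 − 1/p2) > max{0, 1/u1 − 1/u2} and moreover (σ1 − σ2)/d > 1/p1 − 1/p2. Then there exist constants c1, c2 > 0 such that for all k ∈ ℕ, c1 · k^{−(σ1−σ2)/d} ≤ e_k(id : ñ^{σ1}_{u1,p1,q1}(Q) → ñ^{σ2}_{u2,p2,q2}(Q)) ≤ c2 · k^{−(σ1−σ2)/d}. -/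
open scoped ENNReal NNReal

theorem kraft {ι : Type*} [Fintype ι] [DecidableEq ι] (w : ℤ → ℝ) (hw : ∀ z, 0 ≤ w z) (E X : ℝ)
    (hE : ∀ s : Finset ℤ, ∑ z ∈ s, w z ≤ Real.exp E) (F : Finset (ι → ℤ))
    (hF : ∀ f ∈ F, Real.exp (-X) ≤ ∏ i, w (f i)) :
    (F.card : ℝ) ≤ Real.exp (Fintype.card ι * E + X) := by
  classical
  set s : Finset ℤ := F.biUnion (fun f => Finset.univ.image f) with hs
  have hsub : F ⊆ Fintype.piFinset (fun _ : ι => s) := by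
    intro f hf
    rw [Fintype.mem_piFinset]
    intro i
    rw [hs, Finset.mem_biUnion]
    exact ⟨f, hf, Finset.mem_image_of_mem _ (Finset.mem_univ _)⟩
  have h1 : (F.card : ℝ) * Real.exp (-X) ≤ Real.exp E ^ Fintype.card ι := by
    calc (F.card : ℝ) * Real.exp (-X) = ∑ f ∈ F, Real.exp (-X) := by simp
      _ ≤ ∑ f ∈ F, ∏ i, w (f i) := Finset.sum_le_sum hF
      _ ≤ ∑ f ∈ Fintype.piFinset (fun _ : ι => s), ∏ i, w (f i) :=
          Finset.sum_le_sum_of_subset_of_nonneg hsub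
            (fun _ _ _ => Finset.prod_nonneg (fun _ _ => hw _))
      _ = ∏ i : ι, ∑ z ∈ s, w z := by rw [Finset.prod_univ_sum]
      _ = (∑ z ∈ s, w z) ^ Fintype.card ι := by simp
      _ ≤ _ := by
        gcongr
        · exact Finset.sum_nonneg (fun _ _ => hw _)
        · exact hE s
  rw [Real.exp_add, Real.exp_nat_mul]
  calc (F.card : ℝ) = F.card * Real.exp (-X) * Real.exp X := by
        rw [mul_assoc, ← Real.exp_add]; simp
    _ ≤ _ := by gcongr

theorem count (p : ℝ) (hp : 0 < p) : ∃ C : ℝ, 0 < C ∧ ∀ (ι : Type) [Fintype ι] (R : ℝ), 0 < R →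
    ∀ F : Finset (ι → ℤ), (∀ f ∈ F, ∑ i, |(f i : ℝ)| ^ p ≤ Fintype.card ι * R ^ p) →
    (F.card : ℝ) ≤ Real.exp (Fintype.card ι * min 1 (R ^ p) * (C + C * |Real.log R|)) := by
  classical
  have hsum : Summable (fun z : ℤ => 1 / (z : ℝ) ^ 2) :=
    Real.summable_one_div_int_pow.mpr one_lt_two
  set C0 : ℝ := ∑' z : ℤ, 1 / (z : ℝ) ^ 2 with hC0
  have hC0' : 0 ≤ C0 := tsum_nonneg (fun z => by positivity)
  refine ⟨C0 + 2 / p + p + 2, by positivity, ?_⟩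
  intro ι _ R hR F hF
  set ε : ℝ := min 1 (R ^ p) with hε
  have hRp : 0 < R ^ p := Real.rpow_pos_of_pos hR p
  have hε0 : 0 < ε := lt_min one_pos hRp
  set n : ℝ := (Fintype.card ι : ℝ) with hn
  have hn0 : 0 ≤ n := Nat.cast_nonneg _
  let w : ℤ → ℝ := fun z => if z = 0 then 1 else ε * (1 / (z : ℝ) ^ 2)
  have hw : ∀ z, 0 ≤ w z := by
    intro z; simp only [w]; split_ifs <;> positivity
  have hE : ∀ s : Finset ℤ, ∑ z ∈ s, w z ≤ Real.exp (ε * C0) := by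
    intro s
    have : ∑ z ∈ s, w z ≤ ε * C0 + 1 := by
      calc ∑ z ∈ s, w z ≤ ∑ z ∈ s, (ε * (1 / (z : ℝ) ^ 2) + if z = 0 then 1 else 0) := by
            apply Finset.sum_le_sum
            intro z _
            simp only [w]
            split_ifs with h
            · simp [h]
            · simp
        _ = ε * ∑ z ∈ s, (1 / (z : ℝ) ^ 2) + ∑ z ∈ s, (if z = 0 then 1 else 0) := by
            rw [Finset.sum_add_distrib, Finset.mul_sum]
        _ ≤ ε * C0 + 1 := by
            gcongr
            · exact hsum.sum_le_tsum s (fun z _ => by positivity)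
            · rw [Finset.sum_ite_eq']; split_ifs <;> norm_num
    exact this.trans (Real.add_one_le_exp _)
  -- per-coordinate
  have hz1 : ∀ z : ℤ, z ≠ 0 → (1 : ℝ) ≤ |(z : ℝ)| := by
    intro z hz
    have := Int.one_le_abs hz
    exact_mod_cast this
  have hlog : ∀ x : ℝ, 0 < x → Real.log x ≤ x ^ p / p := by
    intro x hx
    exact Real.log_le_rpow_div hx.le hp
  have hX : ∀ f ∈ F, Real.exp (-(n * ε * (2 / p + (p + 2) * |Real.log R|))) ≤ ∏ i, w (f i) := by
    intro f hf
    obtain ⟨g, hg1, hg2⟩ : ∃ g : ℤ → ℝ, (∀ z, Real.exp (-g z) ≤ w z) ∧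
        ∑ i, g (f i) ≤ n * ε * (2 / p + (p + 2) * |Real.log R|) := by
      have key : ∀ (g : ℤ → ℝ), (∀ z, 0 ≤ g z) →
          (∀ z : ℤ, z ≠ 0 → -Real.log ε + 2 * Real.log |(z : ℝ)| ≤ g z) →
          ∀ z, Real.exp (-g z) ≤ w z := by
        intro g hg hg' z
        simp only [w]
        split_ifs with h
        · have := hg z
          rw [Real.exp_le_one_iff]; linarith
        · have h0 : 0 < |(z : ℝ)| := lt_of_lt_of_le one_pos (hz1 z h)
          rw [← Real.le_log_iff_exp_le (by positivity), ← sq_abs,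
            Real.log_mul hε0.ne' (by positivity), one_div, Real.log_inv, Real.log_pow]
          have := hg' z h
          push_cast
          linarith
      rcases le_total R 1 with hR1 | hR1
      · have hεR : ε = R ^ p := min_eq_right (Real.rpow_le_one hR.le hR1 hp.le)
        have hlR : Real.log R ≤ 0 := Real.log_nonpos hR.le hR1
        have habs : |Real.log R| = - Real.log R := abs_of_nonpos hlR
        refine ⟨fun z => |(z : ℝ)| ^ p * (2 / p + p * |Real.log R|), ?_, ?_⟩
        · apply key
          · intro z; positivity
          · intro z hz
            have h1 := hz1 z hz
            have h2 := hlog _ (lt_of_lt_of_le one_pos h1)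
            have h3 : (1 : ℝ) ≤ |(z : ℝ)| ^ p := Real.one_le_rpow h1 hp.le
            rw [hεR, Real.log_rpow hR, habs]
            have h4 : 0 ≤ p * (- Real.log R) := by
              apply mul_nonneg hp.le; linarith
            have h5 : |(z : ℝ)| ^ p * (2 / p + p * (-Real.log R)) =
              2 * (|(z : ℝ)| ^ p / p) + |(z : ℝ)| ^ p * (p * (-Real.log R)) := by ring
            rw [h5]
            nlinarith
        · rw [← Finset.sum_mul, hεR]
          have hh := hF f hf
          have : 2 / p + p * |Real.log R| ≤ 2 / p + (p + 2) * |Real.log R| := by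
            gcongr; linarith
          exact mul_le_mul hh this (by positivity) (by positivity)
      · have hεR : ε = 1 := min_eq_left (Real.one_le_rpow hR1 hp.le)
        have hlR : 0 ≤ Real.log R := Real.log_nonneg hR1
        have habs : |Real.log R| = Real.log R := abs_of_nonneg hlR
        refine ⟨fun z => 2 * Real.log R + 2 / p * (|(z : ℝ)| ^ p / R ^ p), ?_, ?_⟩
        · apply key
          · intro z; positivity
          · intro z hz
            have h1 := hz1 z hz
            have h0 : 0 < |(z : ℝ)| := lt_of_lt_of_le one_pos h1
            have h2 := hlog (|(z : ℝ)| / R) (by positivity)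
            rw [Real.log_div h0.ne' hR.ne', Real.div_rpow h0.le hR.le] at h2
            rw [hεR, Real.log_one]
            have : 2 / p * (|(z : ℝ)| ^ p / R ^ p) = 2 * (|(z : ℝ)| ^ p / R ^ p / p) := by ring
            rw [this]
            linarith
        · have e : ∑ i, (2 * Real.log R + 2 / p * (|(f i : ℝ)| ^ p / R ^ p)) =
              n * (2 * Real.log R) + 2 / p * ((∑ i, |(f i : ℝ)| ^ p) / R ^ p) := by
            rw [Finset.sum_add_distrib, Finset.sum_div, Finset.mul_sum]
            simp [hn]
          rw [e, hεR, habs]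
          have hh := hF f hf
          have h6 : (∑ i, |(f i : ℝ)| ^ p) / R ^ p ≤ n := by
            rw [div_le_iff₀ hRp]; exact hh
          have h7 : 2 / p * ((∑ i, |(f i : ℝ)| ^ p) / R ^ p) ≤ 2 / p * n := by gcongr
          have h8 : 0 ≤ n * (p * Real.log R) := by positivity
          nlinarith
    calc _ ≤ Real.exp (∑ i, -g (f i)) := by
          rw [Real.exp_le_exp, Finset.sum_neg_distrib]; linarith
      _ = ∏ i, Real.exp (-g (f i)) := Real.exp_sum _ _
      _ ≤ _ := Finset.prod_le_prod (fun _ _ => (Real.exp_pos _).le) (fun i _ => hg1 _)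
  refine (kraft w hw _ _ hE F hX).trans ?_
  rw [Real.exp_le_exp]
  have h9 : 0 ≤ n * ε := by positivity
  have h10 : 0 ≤ |Real.log R| := abs_nonneg _
  have h11 : 0 ≤ n * ε * ((C0 + 2 / p) * |Real.log R|) := by positivity
  have h12 : 0 ≤ n * ε * (p + 2) := by positivity
  rw [← hn]
  nlinarith

/-- geometric sums centred at a real point -/
theorem geo (a : ℝ) (ha : 0 < a) : ∃ C : ℝ, 0 < C ∧ ∀ J : ℝ,
    ∑' j : ℕ, ENNReal.ofReal ((2 : ℝ) ^ (-a * |(j : ℝ) - J|)) ≤ ENNReal.ofReal C := by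
  have hr0 : 0 < (2 : ℝ) ^ (-a) := by positivity
  have hr1 : (2 : ℝ) ^ (-a) < 1 := Real.rpow_lt_one_of_one_lt_of_neg one_lt_two (by linarith)
  have hs : Summable (fun i : ℤ => (2 : ℝ) ^ (-a * |(i : ℝ)|)) := by
    have hnat : Summable (fun n : ℕ => (2 : ℝ) ^ (-a * n)) := by
      have := summable_geometric_of_lt_one hr0.le hr1
      refine this.congr (fun n => ?_)
      rw [Real.rpow_mul (by norm_num), Real.rpow_natCast]
    apply Summable.of_nat_of_neg
    · simpa using hnat
    · simpa using hnat
  set C0 := ∑' i : ℤ, (2 : ℝ) ^ (-a * |(i : ℝ)|) with hC0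
  have hC0' : 0 ≤ C0 := tsum_nonneg (fun z => by positivity)
  refine ⟨2 ^ a * C0 + 1, by positivity, fun J => ?_⟩
  calc ∑' j : ℕ, ENNReal.ofReal ((2 : ℝ) ^ (-a * |(j : ℝ) - J|))
      ≤ ∑' j : ℕ, ENNReal.ofReal (2 ^ a * (2 : ℝ) ^ (-a * |(((j : ℤ) - ⌊J⌋ : ℤ) : ℝ)|)) := by
        apply ENNReal.tsum_le_tsum
        intro j
        apply ENNReal.ofReal_le_ofReal
        rw [← Real.rpow_add (by norm_num)]
        apply Real.rpow_le_rpow_of_exponent_le (by norm_num)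
        have h1 := Int.floor_le J
        have h2 := Int.lt_floor_add_one J
        have h3 : |(((j : ℤ) - ⌊J⌋ : ℤ) : ℝ)| ≤ |(j : ℝ) - J| + 1 := by
          push_cast
          have : (j : ℝ) - ⌊J⌋ = ((j : ℝ) - J) + (J - ⌊J⌋) := by ring
          rw [this]
          refine (abs_add_le _ _).trans ?_
          gcongr
          rw [abs_of_nonneg] <;> linarith
        nlinarith
    _ ≤ ∑' i : ℤ, ENNReal.ofReal (2 ^ a * (2 : ℝ) ^ (-a * |(((i : ℤ) - ⌊J⌋ : ℤ) : ℝ)|)) :=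
        ENNReal.tsum_comp_le_tsum_of_injective
          (f := fun j : ℕ => (j : ℤ)) Nat.cast_injective
          (fun i : ℤ => ENNReal.ofReal (2 ^ a * (2 : ℝ) ^ (-a * |(((i : ℤ) - ⌊J⌋ : ℤ) : ℝ)|)))
    _ = ∑' i : ℤ, ENNReal.ofReal (2 ^ a * (2 : ℝ) ^ (-a * |(i : ℝ)|)) :=
        (Equiv.subRight ⌊J⌋).tsum_eq
          (fun i : ℤ => ENNReal.ofReal (2 ^ a * (2 : ℝ) ^ (-a * |(i : ℝ)|)))
    _ = ENNReal.ofReal (2 ^ a * C0) := by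
        rw [hC0, ← tsum_mul_left, ENNReal.ofReal_tsum_of_nonneg (fun _ => by positivity)
          (hs.mul_left _)]
    _ ≤ _ := ENNReal.ofReal_le_ofReal (by linarith)

theorem cubeSub_set (d j ν : ℕ) (k : Fin d → ℤ) :
    {m | cubeSub d j ν m k} = ((Fintype.piFinset fun i =>
      Finset.Ico (k i * 2 ^ (j - ν)) ((k i + 1) * 2 ^ (j - ν)) : Finset (Fin d → ℤ)) : Set (Fin d → ℤ)) := by
  ext m
  simp [cubeSub]

noncomputable instance cubeFintype (d j ν : ℕ) (k : Fin d → ℤ) :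
    Fintype {m : Fin d → ℤ // cubeSub d j ν m k} :=
  ((Set.toFinite (α := Fin d → ℤ) ((Fintype.piFinset fun i =>
      Finset.Ico (k i * 2 ^ (j - ν)) ((k i + 1) * 2 ^ (j - ν)) : Finset (Fin d → ℤ)) :
        Set (Fin d → ℤ))).subset (cubeSub_set d j ν k).subset).fintype

theorem card_cube (d j ν : ℕ) (k : Fin d → ℤ) :
    Fintype.card {m : Fin d → ℤ // cubeSub d j ν m k} = 2 ^ ((j - ν) * d) := by
  rw [← Nat.card_eq_fintype_card]
  have : Nat.card {m : Fin d → ℤ // cubeSub d j ν m k} =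
      Nat.card ((Fintype.piFinset fun i =>
      Finset.Ico (k i * 2 ^ (j - ν)) ((k i + 1) * 2 ^ (j - ν)) : Finset (Fin d → ℤ)) : Set (Fin d → ℤ)) := by
    rw [← cubeSub_set]; rfl
  rw [this]
  simp only [Nat.card_eq_fintype_card, Finset.coe_sort_coe, Fintype.card_coe,
    Fintype.card_piFinset, Int.card_Ico]
  have h : ∀ i, ((k i + 1) * 2 ^ (j - ν) - k i * 2 ^ (j - ν) : ℤ).toNat = 2 ^ (j - ν) := by
    intro i
    have : ((k i + 1) * 2 ^ (j - ν) - k i * 2 ^ (j - ν) : ℤ) = ((2 ^ (j - ν) : ℕ) : ℤ) := by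
      push_cast; ring
    rw [this, Int.toNat_natCast]
  simp [h, pow_mul]

theorem cubeSub_zero (d j : ℕ) (m : Fin d → ℤ) : cubeSub d j 0 m 0 ↔ inUnitCube d j m := by
  simp [cubeSub, inUnitCube]

theorem cubeSub_inUnit {d j ν : ℕ} {m k : Fin d → ℤ} (hν : ν ≤ j) (hk : inUnitCube d ν k)
    (hm : cubeSub d j ν m k) : inUnitCube d j m := by
  intro i
  obtain ⟨h1, h2⟩ := hk i
  obtain ⟨h3, h4⟩ := hm i
  have hpos : (0 : ℤ) < 2 ^ (j - ν) := by positivity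
  refine ⟨le_trans (by positivity) h3, lt_of_lt_of_le h4 ?_⟩
  have : (2 : ℤ) ^ j = 2 ^ ν * 2 ^ (j - ν) := by rw [← pow_add]; congr 1; omega
  rw [this]
  gcongr
  omega

theorem level_le_iff (d : ℕ) (u p : ℝ) (hp : 0 < p) (j : ℕ) (lam : (Fin d → ℤ) → ℂ) (a : ℝ)
    (C : ℝ≥0∞) :
    (2 : ℝ≥0∞) ^ a * mNorm d u p j lam ≤ C ↔ ∀ ν ≤ j, ∀ k, inUnitCube d ν k →
      ∑' m : {m : Fin d → ℤ // cubeSub d j ν m k}, ((‖lam m.1‖₊ : ℝ≥0∞)) ^ p ≤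
        (C * 2 ^ (-(a + (d : ℝ) * ((j : ℝ) - (ν : ℝ)) * (1 / u - 1 / p)))) ^ p := by
  have h20 : (2 : ℝ≥0∞) ≠ 0 := by norm_num
  have h2t : (2 : ℝ≥0∞) ≠ ⊤ := by norm_num
  have key : ∀ (b : ℝ) (y : ℝ≥0∞), 2 ^ a * (2 ^ b * y ^ (1 / p)) ≤ C ↔
      y ≤ (C * 2 ^ (-(a + b))) ^ p := by
    intro b y
    rw [← mul_assoc, ← ENNReal.rpow_add _ _ h20 h2t, ENNReal.rpow_neg, ← div_eq_mul_inv,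
      ← ENNReal.rpow_inv_le_iff hp, ENNReal.le_div_iff_mul_le, mul_comm, one_div]
    · left; simp
    · left; exact ENNReal.rpow_ne_top_of_ne_zero h20 h2t
  unfold mNorm
  rw [ENNReal.mul_iSup, iSup_le_iff]
  constructor
  · intro h ν hν k hk
    rw [← key]
    exact h ⟨(ν, k), hν, hk⟩
  · rintro h ⟨⟨ν, k⟩, hν, hk⟩
    rw [key]
    exact h ν hν k hk

theorem level_le_of_nNorm {d : ℕ} {σ u p : ℝ} {q : ℝ≥0∞} (hq : 0 < q)
    {x : ℕ → (Fin d → ℤ) → ℂ} {C : ℝ≥0∞} (h : nNorm d σ u p q x ≤ C) (j : ℕ) :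
    (2 : ℝ≥0∞) ^ ((j : ℝ) * (σ - d / u)) * mNorm d u p j (x j) ≤ C := by
  unfold nNorm at h
  split_ifs at h with hq'
  · exact (le_iSup (fun j : ℕ => (2 : ℝ≥0∞) ^ ((j : ℝ) * (σ - d / u)) * mNorm d u p j (x j)) j).trans h
  · have hq0 : 0 < q.toReal := ENNReal.toReal_pos hq.ne' hq'
    rw [one_div, ENNReal.rpow_inv_le_iff hq0] at h
    rw [← ENNReal.rpow_le_rpow_iff hq0]
    exact (ENNReal.le_tsum j).trans h

theorem nNorm_le_of_level {d : ℕ} {σ u p : ℝ} {q : ℝ≥0∞} (hq : 0 < q) (a : ℝ) (ha : 0 < a) :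
    ∃ C : ℝ, 0 < C ∧ ∀ (J D : ℝ) (x : ℕ → (Fin d → ℤ) → ℂ), 0 < D →
    (∀ j : ℕ, (2 : ℝ≥0∞) ^ ((j : ℝ) * (σ - d / u)) * mNorm d u p j (x j) ≤
      ENNReal.ofReal (D * 2 ^ (-a * |(j : ℝ) - J|))) →
    nNorm d σ u p q x ≤ ENNReal.ofReal (C * D) := by
  by_cases hq' : q = ∞
  · refine ⟨1, one_pos, fun J D x hD h => ?_⟩
    simp only [nNorm, if_pos hq']
    refine iSup_le fun j => (h j).trans ?_
    apply ENNReal.ofReal_le_ofReal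
    rw [mul_comm 1 D]
    gcongr
    apply Real.rpow_le_one_of_one_le_of_nonpos one_le_two
    have := abs_nonneg ((j : ℝ) - J)
    nlinarith
  · have hq0 : 0 < q.toReal := ENNReal.toReal_pos hq.ne' hq'
    obtain ⟨C, hC, hg⟩ := geo (a * q.toReal) (by positivity)
    refine ⟨C ^ (q.toReal)⁻¹, by positivity, fun J D x hD h => ?_⟩
    simp only [nNorm, if_neg hq']
    rw [one_div, ENNReal.rpow_inv_le_iff hq0]
    calc _ ≤ ∑' j : ℕ, ENNReal.ofReal (D ^ q.toReal) *
            ENNReal.ofReal ((2 : ℝ) ^ (-(a * q.toReal) * |(j : ℝ) - J|)) := by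
          apply ENNReal.tsum_le_tsum
          intro j
          refine (ENNReal.rpow_le_rpow (h j) hq0.le).trans ?_
          rw [ENNReal.ofReal_rpow_of_pos (by positivity), ← ENNReal.ofReal_mul (by positivity),
            Real.mul_rpow (by positivity) (by positivity), ← Real.rpow_mul (by norm_num)]
          apply le_of_eq
          congr 3
          ring
      _ = ENNReal.ofReal (D ^ q.toReal) * ∑' j : ℕ,
            ENNReal.ofReal ((2 : ℝ) ^ (-(a * q.toReal) * |(j : ℝ) - J|)) := ENNReal.tsum_mul_left
      _ ≤ ENNReal.ofReal (D ^ q.toReal) * ENNReal.ofReal C := by gcongr; exact hg J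
      _ = _ := by
          rw [ENNReal.ofReal_rpow_of_pos (by positivity), ← ENNReal.ofReal_mul (by positivity),
            Real.mul_rpow (by positivity) (by positivity), Real.rpow_inv_rpow hC.le hq0.ne',
            mul_comm]

theorem level_error {d : ℕ} {σ1 σ2 u1 p1 u2 p2 : ℝ} (hp1 : 0 < p1) (hp2 : 0 < p2)
    (hu1 : 0 < u1) (hu2 : 0 < u2) (hp : p1 < p2) (hu : p1 / (u1 * p2) ≤ 1 / u2)
    (j : ℕ) (t : ℝ) (x g : (Fin d → ℤ) → ℂ)
    (hx : (2 : ℝ≥0∞) ^ ((j : ℝ) * (σ1 - d / u1)) * mNorm d u1 p1 j x ≤ 1)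
    (hg1 : ∀ m, inUnitCube d j m → ‖(x - g) m‖ ≤ ‖x m‖)
    (hg2 : ∀ m, inUnitCube d j m → ‖(x - g) m‖ ≤ 2 ^ (1 + t - j * σ1)) :
    (2 : ℝ≥0∞) ^ ((j : ℝ) * (σ2 - d / u2)) * mNorm d u2 p2 j (x - g) ≤
      2 ^ (-(j * (σ1 - σ2)) + (1 + t) * (1 - p1 / p2)) := by
  have h20 : (2 : ℝ≥0∞) ≠ 0 := by norm_num
  have h2t : (2 : ℝ≥0∞) ≠ ⊤ := by norm_num
  rw [level_le_iff _ _ _ hp1] at hx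
  rw [level_le_iff _ _ _ hp2]
  intro ν hν k hk
  have h := hx ν hν k hk
  rw [one_mul, ← ENNReal.rpow_mul] at h
  rw [← ENNReal.rpow_add _ _ h20 h2t, ← ENNReal.rpow_mul]
  calc _ ≤ ∑' m : {m : Fin d → ℤ // cubeSub d j ν m k},
        2 ^ ((1 + t - j * σ1) * (p2 - p1)) * ((‖x m.1‖₊ : ℝ≥0∞)) ^ p1 := by
        apply ENNReal.tsum_le_tsum
        rintro ⟨m, hm⟩
        have hm' := cubeSub_inUnit hν hk hm
        have e1 : ((‖(x - g) m‖₊ : ℝ≥0∞)) ≤ (‖x m‖₊ : ℝ≥0∞) := by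
          exact_mod_cast hg1 m hm'
        have e2 : ((‖(x - g) m‖₊ : ℝ≥0∞)) ≤ 2 ^ (1 + t - j * σ1) := by
          have := ENNReal.ofReal_le_ofReal (hg2 m hm')
          rw [← ENNReal.ofReal_rpow_of_pos (by norm_num)] at this
          simpa [ofReal_norm, enorm_eq_nnnorm] using this
        have e3 : ((‖(x - g) m‖₊ : ℝ≥0∞)) ^ p2 =
            ((‖(x - g) m‖₊ : ℝ≥0∞)) ^ (p2 - p1) * ((‖(x - g) m‖₊ : ℝ≥0∞)) ^ p1 := by
          rw [← ENNReal.rpow_add_of_nonneg _ _ (by linarith) hp1.le]; congr 1; ring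
        simp only
        rw [e3, ENNReal.rpow_mul]
        exact mul_le_mul' (ENNReal.rpow_le_rpow e2 (by linarith)) (ENNReal.rpow_le_rpow e1 hp1.le)
    _ = 2 ^ ((1 + t - j * σ1) * (p2 - p1)) *
        ∑' m : {m : Fin d → ℤ // cubeSub d j ν m k}, ((‖x m.1‖₊ : ℝ≥0∞)) ^ p1 :=
        ENNReal.tsum_mul_left
    _ ≤ _ := mul_le_mul' le_rfl h
    _ ≤ _ := by
      rw [← ENNReal.rpow_add _ _ h20 h2t]
      apply ENNReal.rpow_le_rpow_of_exponent_le (by norm_num)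
      have h5 : 0 ≤ p2 * d * ν * (1 / u2 - p1 / (u1 * p2)) := by
        have : 0 ≤ 1 / u2 - p1 / (u1 * p2) := by linarith
        positivity
      rw [← sub_nonneg]
      refine h5.trans (le_of_eq ?_)
      field_simp
      ring


/-- rounding toward zero -/
noncomputable def tr (r : ℝ) : ℤ := if 0 ≤ r then ⌊r⌋ else ⌈r⌉

theorem tr_spec (r : ℝ) : |(tr r : ℝ)| ≤ |r| ∧ |r - tr r| ≤ |r| ∧ |r - tr r| ≤ 1 := by
  unfold tr
  split_ifs with h
  · have h1 := Int.floor_le r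
    have h2 := Int.lt_floor_add_one r
    have h3 : (0 : ℝ) ≤ ⌊r⌋ := by exact_mod_cast Int.floor_nonneg.mpr h
    rw [abs_of_nonneg h, abs_of_nonneg h3, abs_of_nonneg (by linarith)]
    refine ⟨h1, by linarith, by linarith⟩
  · push Not at h
    have h1 := Int.le_ceil r
    have h2 := Int.ceil_lt_add_one r
    have h3 : (⌈r⌉ : ℝ) ≤ 0 := by exact_mod_cast Int.ceil_le.mpr (by simpa using h.le)
    rw [abs_of_neg h, abs_of_nonpos h3, abs_of_nonpos (by linarith)]
    refine ⟨by linarith, by linarith, by linarith⟩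

abbrev UC (d j : ℕ) := {m : Fin d → ℤ // cubeSub d j 0 m 0}

theorem card_UC (d j : ℕ) : (Fintype.card (UC d j) : ℝ) = 2 ^ ((j : ℝ) * d) := by
  rw [card_cube]
  push_cast
  rw [← Real.rpow_natCast]
  push_cast
  simp

open Classical in
noncomputable def dec (d : ℕ) (S : ℕ → ℝ) (ab : (∀ j, UC d j → ℤ) × (∀ j, UC d j → ℤ)) :
    ℕ → (Fin d → ℤ) → ℂ := fun j m =>
  if h : cubeSub d j 0 m 0 then ⟨S j * ab.1 j ⟨m, h⟩, S j * ab.2 j ⟨m, h⟩⟩ else 0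

theorem dec_err (d : ℕ) (S : ℕ → ℝ) (hS : ∀ j, 0 < S j) (x : ℕ → (Fin d → ℤ) → ℂ) (j : ℕ)
    (m : Fin d → ℤ) (hm : inUnitCube d j m) :
    ‖(x j - dec d S (fun j m => tr ((x j m).re / S j), fun j m => tr ((x j m).im / S j)) j) m‖
      ≤ ‖x j m‖ ∧
    ‖(x j - dec d S (fun j m => tr ((x j m).re / S j), fun j m => tr ((x j m).im / S j)) j) m‖
      ≤ 2 * S j := by
  have hm' : cubeSub d j 0 m 0 := (cubeSub_zero d j m).mpr hm
  have key : ∀ r : ℝ, |r - S j * tr (r / S j)| ≤ |r| ∧ |r - S j * tr (r / S j)| ≤ S j := by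
    intro r
    obtain ⟨-, h2, h3⟩ := tr_spec (r / S j)
    have h0 := hS j
    have e : r - S j * tr (r / S j) = S j * (r / S j - tr (r / S j)) := by
      field_simp
    have e2 : |r| = S j * |r / S j| := by
      rw [abs_div, abs_of_pos h0]; field_simp
    rw [e, abs_mul, abs_of_pos h0, e2]
    refine ⟨by gcongr, ?_⟩
    nlinarith
  obtain ⟨a1, a2⟩ := key (x j m).re
  obtain ⟨b1, b2⟩ := key (x j m).im
  have hre : ((x j - dec d S (fun j m => tr ((x j m).re / S j), fun j m => tr ((x j m).im / S j)) j) m).re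
      = (x j m).re - S j * tr ((x j m).re / S j) := by
    simp [dec, hm']
  have him : ((x j - dec d S (fun j m => tr ((x j m).re / S j), fun j m => tr ((x j m).im / S j)) j) m).im
      = (x j m).im - S j * tr ((x j m).im / S j) := by
    simp [dec, hm']
  generalize (x j - dec d S (fun j m => tr ((x j m).re / S j), fun j m => tr ((x j m).im / S j)) j) m
    = z at hre him ⊢
  constructor
  · rw [← sq_le_sq₀ (norm_nonneg _) (norm_nonneg _), Complex.sq_norm, Complex.sq_norm,
      Complex.normSq_apply, Complex.normSq_apply, hre, him]
    have := sq_le_sq.mpr a1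
    have := sq_le_sq.mpr b1
    nlinarith
  · refine (Complex.norm_le_abs_re_add_abs_im z).trans ?_
    rw [hre, him]; linarith

theorem code_sum {d : ℕ} {σ u p : ℝ} (hp : 0 < p)
    (j : ℕ) (t : ℝ) (x : (Fin d → ℤ) → ℂ)
    (hx : (2 : ℝ≥0∞) ^ ((j : ℝ) * (σ - d / u)) * mNorm d u p j x ≤ 1)
    (c : UC d j → ℤ) (hc : ∀ m, |(c m : ℝ)| ≤ ‖x m‖ / 2 ^ (t - j * σ)) :
    ∑ m, |(c m : ℝ)| ^ p ≤ Fintype.card (UC d j) * ((2 : ℝ) ^ (-t)) ^ p := by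
  rw [level_le_iff _ _ _ hp] at hx
  have h := hx 0 (Nat.zero_le _) 0 (by intro i; simp)
  rw [tsum_fintype, one_mul] at h
  have h' : ∑ m : UC d j, ‖x m‖ ^ p ≤ (2 : ℝ) ^ (-(j * (σ - d / u) + d * (j - (0 : ℕ)) * (1 / u - 1 / p)) * p) := by
    have h3 := ENNReal.toReal_mono (by
      apply ENNReal.rpow_ne_top_of_nonneg hp.le
      exact ENNReal.rpow_ne_top_of_ne_zero (by norm_num) (by norm_num)) h
    rw [ENNReal.toReal_sum (fun m _ => ENNReal.rpow_ne_top_of_nonneg hp.le (by simp)),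
      ← ENNReal.rpow_mul, ← ENNReal.toReal_rpow] at h3
    simpa [← ENNReal.toReal_rpow] using h3
  rw [card_UC]
  calc ∑ m, |(c m : ℝ)| ^ p ≤ ∑ m : UC d j, (2 : ℝ) ^ (-(t - j * σ) * p) * ‖x m‖ ^ p := by
        apply Finset.sum_le_sum
        intro m _
        refine (Real.rpow_le_rpow (abs_nonneg _) (hc m) hp.le).trans (le_of_eq ?_)
        rw [Real.div_rpow (norm_nonneg _) (by positivity), ← Real.rpow_mul (by norm_num), neg_mul,
          Real.rpow_neg (by norm_num)]
        field_simp
    _ = (2 : ℝ) ^ (-(t - j * σ) * p) * ∑ m : UC d j, ‖x m‖ ^ p := by rw [Finset.mul_sum]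
    _ ≤ _ := mul_le_mul_of_nonneg_left h' (by positivity)
    _ = _ := by
      rw [← Real.rpow_mul (by norm_num), ← Real.rpow_add (by norm_num),
        ← Real.rpow_add (by norm_num)]
      congr 1
      push_cast
      field_simp
      ring

theorem finite_of_card {α : Type*} (A : Set α) (B : ℝ)
    (h : ∀ F : Finset α, (∀ f ∈ F, f ∈ A) → (F.card : ℝ) ≤ B) : A.Finite ∧ (A.ncard : ℝ) ≤ B := by
  have hf : A.Finite := by
    by_contra hinf
    obtain ⟨t, ht, htc⟩ := Set.Infinite.exists_subset_card_eq hinf (⌈B⌉₊ + 1)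
    have := h t (fun f hf => ht hf)
    rw [htc] at this
    have h2 := Nat.le_ceil B
    push_cast at this
    linarith
  refine ⟨hf, ?_⟩
  rw [Set.ncard_eq_toFinset_card A hf]
  exact h _ (fun f hf' => by simpa using hf')

theorem count_pi {α : ℕ → Type} (A : ∀ j, Set (α j)) (b : ℕ → ℝ) (B : ℝ)
    (hfin : ∀ j, (A j).Finite) (hA : ∀ j, ((A j).ncard : ℝ) ≤ Real.exp (b j))
    (hL : ∃ L, ∀ j, L ≤ j → (A j).Subsingleton)
    (hB : ∀ s : Finset ℕ, ∑ j ∈ s, b j ≤ B) :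
    {f : ∀ j, α j | ∀ j, f j ∈ A j}.Finite ∧
    (({f : ∀ j, α j | ∀ j, f j ∈ A j}).ncard : ℝ) ≤ Real.exp B := by
  classical
  obtain ⟨L, hL⟩ := hL
  apply finite_of_card
  intro F hF
  have h1 : F.card ≤ (Fintype.piFinset (fun j : Fin L => (hfin j).toFinset)).card := by
    apply Finset.card_le_card_of_injOn (fun f (j : Fin L) => f j)
    · intro f hf
      simp only [Finset.mem_coe, Fintype.mem_piFinset, Set.Finite.mem_toFinset]
      intro j
      exact hF f hf j
    · intro f hf g hg hfg
      funext j
      by_cases hj : j < L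
      · exact congrFun hfg ⟨j, hj⟩
      · exact hL j (not_lt.mp hj) (hF f hf j) (hF g hg j)
  calc (F.card : ℝ) ≤ ((Fintype.piFinset (fun j : Fin L => (hfin j).toFinset)).card : ℝ) := by
        exact_mod_cast h1
    _ = ∏ j : Fin L, ((A j).ncard : ℝ) := by
        rw [Fintype.card_piFinset]
        push_cast
        refine Finset.prod_congr rfl fun j _ => ?_
        rw [Set.ncard_eq_toFinset_card _ (hfin j)]
    _ ≤ ∏ j : Fin L, Real.exp (b j) :=
        Finset.prod_le_prod (fun _ _ => by positivity) (fun j _ => hA j)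
    _ = Real.exp (∑ j : Fin L, b j) := (Real.exp_sum _ _).symm
    _ ≤ Real.exp B := by
        rw [Real.exp_le_exp, Fin.sum_univ_eq_sum_range]
        exact hB _

theorem enum_cover {Λ : Type*} [Inhabited Λ] (G : Set Λ) (hG : G.Finite) (n : ℕ)
    (h : G.ncard ≤ n) : ∃ c : Fin n → Λ, ∀ g ∈ G, ∃ i, c i = g := by
  classical
  have hc : hG.toFinset.card ≤ n := by rwa [← Set.ncard_eq_toFinset_card G hG]
  refine ⟨fun i => if h : i.1 < hG.toFinset.card then
    (hG.toFinset.equivFin.symm ⟨i.1, h⟩ : Λ) else default, fun g hg => ?_⟩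
  have hg' : g ∈ hG.toFinset := by simpa using hg
  have hlt := (hG.toFinset.equivFin ⟨g, hg'⟩).2
  refine ⟨⟨(hG.toFinset.equivFin ⟨g, hg'⟩).1, hlt.trans_le hc⟩, ?_⟩
  simp

theorem exponents (D p r s : ℝ) (hD : 0 < D) (hp : 0 < p) (hr : 0 < r) 
    (hs : r / p < s) : ∃ (t : ℝ → ℝ) (a c : ℝ), 0 < a ∧ 0 < c ∧
      (∀ y, D * y ≤ -a * |y| ∨ D * y - p * t y ≤ -a * |y|) ∧
      (∀ y, 0 ≤ y → D * y - p * t y ≤ -a * |y|) ∧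
      (∀ y, -(D * s * y) + t y * r ≤ -a * |y|) ∧ (∀ y, |t y| ≤ c * |y|) := by
  obtain ⟨τ, hτ1, hτ2⟩ : ∃ τ, D / p < τ ∧ τ < D * s / r := by
    apply exists_between
    rw [div_lt_div_iff₀ hp hr]
    rw [div_lt_iff₀ hp] at hs
    nlinarith
  rw [div_lt_iff₀ hp] at hτ1
  rw [lt_div_iff₀ hr] at hτ2
  have hs0 : 0 < s := lt_trans (by positivity) hs
  set τ0 := D * s / r + 1 with hτ0
  have hτ0r : τ0 * r = D * s + r := by rw [hτ0]; field_simp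
  have hτ0p : 0 < τ0 := by positivity
  have hτp : 0 < τ := by
    by_contra hh
    nlinarith
  set a := min (min D (τ * p - D)) (min (D * s - τ * r) r) with ha
  have a1 : a ≤ D := (min_le_left _ _).trans (min_le_left _ _)
  have a2 : a ≤ τ * p - D := (min_le_left _ _).trans (min_le_right _ _)
  have a3 : a ≤ D * s - τ * r := (min_le_right _ _).trans (min_le_left _ _)
  have a4 : a ≤ r := (min_le_right _ _).trans (min_le_right _ _)
  refine ⟨fun y => if 0 ≤ y then τ * y else τ0 * y, a, τ + τ0, ?_, by positivity, ?_, ?_, ?_, ?_⟩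
  · rw [ha]
    refine lt_min (lt_min hD (by linarith)) (lt_min (by linarith) hr)
  · intro y
    rcases le_or_gt 0 y with hy | hy
    · right
      simp only
      rw [abs_of_nonneg hy, if_pos hy]; nlinarith
    · left
      rw [abs_of_neg hy]; nlinarith
  · intro y hy
    simp only
    rw [abs_of_nonneg hy, if_pos hy]; nlinarith
  · intro y
    simp only
    rcases le_or_gt 0 y with hy | hy
    · rw [abs_of_nonneg hy, if_pos hy]; nlinarith
    · rw [abs_of_neg hy, if_neg (not_le.mpr hy)]
      have : τ0 * y * r = (D * s + r) * y := by rw [← hτ0r]; ring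
      rw [this]
      nlinarith
  · intro y
    simp only
    split_ifs
    · rw [abs_mul, abs_of_pos hτp]; gcongr; linarith
    · rw [abs_mul, abs_of_pos hτ0p]; gcongr; linarith

theorem poly_exp (a : ℝ) (ha : 0 < a) (A B : ℝ) (hA : 0 < A) (hB : 0 < B) : ∃ C : ℝ, 0 < C ∧
    ∀ y : ℝ, 0 ≤ y → 2 ^ (-a * y) * (A + B * y) ≤ C * (2 : ℝ) ^ (-(a / 2) * y) := by
  have hl : 0 < Real.log 2 := Real.log_pos one_lt_two
  refine ⟨A + B / (a / 2 * Real.log 2), by positivity, fun y hy => ?_⟩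
  have e : (2 : ℝ) ^ (-a * y) = 2 ^ (-(a / 2) * y) * 2 ^ (-(a / 2) * y) := by
    rw [← Real.rpow_add (by norm_num)]; congr 1; ring
  rw [e, mul_assoc, mul_comm]
  gcongr
  rw [neg_mul, Real.rpow_neg (by norm_num), ← div_eq_inv_mul, div_le_iff₀ (by positivity)]
  have h1 : 1 + a / 2 * Real.log 2 * y ≤ (2 : ℝ) ^ (a / 2 * y) := by
    rw [Real.rpow_def_of_pos (by norm_num)]
    have := Real.add_one_le_exp (Real.log 2 * (a / 2 * y))
    linarith
  have h2 : (A + B / (a / 2 * Real.log 2)) * (1 + a / 2 * Real.log 2 * y) =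
    A + B * y + A * (a / 2 * Real.log 2 * y) + B / (a / 2 * Real.log 2) := by
    field_simp
    ring
  have h3 : 0 ≤ A * (a / 2 * Real.log 2 * y) + B / (a / 2 * Real.log 2) := by positivity
  calc A + B * y ≤ (A + B / (a / 2 * Real.log 2)) * (1 + a / 2 * Real.log 2 * y) := by linarith
    _ ≤ _ := by gcongr


theorem upper (d : ℕ) (hd : 1 ≤ d) (σ1 σ2 u1 p1 u2 p2 : ℝ) (q1 q2 : ℝ≥0∞)
    (hq1 : 0 < q1) (hq2 : 0 < q2)
    (hp1 : 0 < p1) (hp2 : 0 < p2) (hu1 : 0 < u1) (hu2 : 0 < u2)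
    (hp : p1 < p2) (hu : p1 / (u1 * p2) ≤ 1 / u2)
    (h3 : (σ1 - σ2) / d > 1 / p1 - 1 / p2) :
    ∃ c2 : ℝ, 0 < c2 ∧ ∀ k : ℕ, 0 < k →
      entropyNumber (nNorm d σ1 u1 p1 q1) (nNorm d σ2 u2 p2 q2) k ≤
          ENNReal.ofReal (c2 * (k : ℝ) ^ (-(σ1 - σ2) / d)) := by
  have hd0 : (0 : ℝ) < d := by exact_mod_cast hd
  set s := (σ1 - σ2) / d with hs
  set r := 1 - p1 / p2 with hr
  have hr0 : 0 < r := by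
    have : p1 / p2 < 1 := (div_lt_one hp2).mpr hp
    linarith
  have hrs : r / p1 < s := by
    have : r / p1 = 1 / p1 - 1 / p2 := by rw [hr]; field_simp
    linarith
  have hl2 : 0 < Real.log 2 := Real.log_pos one_lt_two
  have hl2' : Real.log 2 ≤ 1 := by linarith [Real.log_two_lt_d9]
  obtain ⟨Cc, hCc, hcount⟩ := count p1 hp1
  obtain ⟨t, a, c, ha, hc, ht1, ht2, ht3, ht4⟩ := exponents d p1 r s hd0 hp1 hr0 hrs
  obtain ⟨C1, hC1, hpoly⟩ := poly_exp a ha Cc (Cc * c) hCc (by positivity)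
  obtain ⟨C2, hC2, hgeo⟩ := geo (a / 2) (by positivity)
  obtain ⟨C3, hC3, hnorm⟩ := nNorm_le_of_level (d := d) (σ := σ2) (u := u2) (p := p2) hq2 a ha
  set c0 := Real.log 2 / (4 * (C1 * C2)) with hc0
  have hc0p : 0 < c0 := by positivity
  refine ⟨C3 * (2 ^ r * c0 ^ (-s)), by positivity, fun k hk => ?_⟩
  have hk0 : (0 : ℝ) < k := by exact_mod_cast hk
  set K := c0 * k with hK
  have hK0 : 0 < K := by positivity
  set J := Real.logb 2 K / d with hJ
  have hJK : (2 : ℝ) ^ (J * d) = K := by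
    rw [hJ, div_mul_cancel₀ _ hd0.ne']
    exact Real.rpow_logb (by norm_num) (by norm_num) hK0
  have hcard : ∀ j : ℕ, (Fintype.card (UC d j) : ℝ) = K * 2 ^ (d * ((j : ℝ) - J)) := by
    intro j
    rw [card_UC, ← hJK, ← Real.rpow_add (by norm_num)]; congr 1; ring
  have hRp : ∀ y : ℝ, ((2 : ℝ) ^ (-t y)) ^ p1 = 2 ^ (-(p1 * t y)) := by
    intro y
    rw [← Real.rpow_mul (by norm_num)]; congr 1; ring
  let A : ∀ j : ℕ, Set (UC d j → ℤ) := fun j =>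
    {f | ∑ m, |(f m : ℝ)| ^ p1 ≤ Fintype.card (UC d j) * ((2 : ℝ) ^ (-t ((j : ℝ) - J))) ^ p1}
  let b : ℕ → ℝ := fun j => K * C1 * 2 ^ (-(a / 2) * |(j : ℝ) - J|)
  have hAb : ∀ j, (A j).Finite ∧ ((A j).ncard : ℝ) ≤ Real.exp (b j) := by
    intro j
    apply finite_of_card
    intro F hF
    refine (hcount (UC d j) (2 ^ (-t ((j : ℝ) - J))) (by positivity) F hF).trans ?_
    rw [Real.exp_le_exp]
    set y := (j : ℝ) - J with hy
    have e1 : |Real.log ((2 : ℝ) ^ (-t y))| ≤ c * |y| := by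
      rw [Real.log_rpow (by norm_num), abs_mul, abs_neg, abs_of_pos hl2]
      have := ht4 y
      have := abs_nonneg (t y)
      nlinarith
    have e2 : (Fintype.card (UC d j) : ℝ) * min 1 (((2 : ℝ) ^ (-t y)) ^ p1) ≤
        K * 2 ^ (-a * |y|) := by
      rw [hcard, mul_assoc]
      gcongr
      rw [← hy, hRp]
      rcases ht1 y with h | h
      · calc (2 : ℝ) ^ (d * y) * min 1 (2 ^ (-(p1 * t y))) ≤ 2 ^ (d * y) * 1 := by
              gcongr; exact min_le_left _ _
          _ ≤ _ := by
              rw [mul_one]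
              exact Real.rpow_le_rpow_of_exponent_le (by norm_num) h
      · calc (2 : ℝ) ^ (d * y) * min 1 (2 ^ (-(p1 * t y))) ≤
              2 ^ (d * y) * 2 ^ (-(p1 * t y)) := by
              gcongr; exact min_le_right _ _
          _ ≤ _ := by
              rw [← Real.rpow_add (by norm_num)]
              exact Real.rpow_le_rpow_of_exponent_le (by norm_num) (by linarith)
    calc _ ≤ K * 2 ^ (-a * |y|) * (Cc + Cc * (c * |y|)) := by gcongr
      _ = K * (2 ^ (-a * |y|) * (Cc + Cc * c * |y|)) := by ring
      _ ≤ K * (C1 * (2 : ℝ) ^ (-(a / 2) * |y|)) := 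
          mul_le_mul_of_nonneg_left (hpoly _ (abs_nonneg _)) hK0.le
      _ = b j := by simp only [b]; ring
  have hL : ∃ L, ∀ j, L ≤ j → (A j).Subsingleton := by
    refine ⟨⌈J + |J| * d / a⌉₊ + 1, fun j hj => ?_⟩
    have hj' : J + |J| * d / a < j := by
      have h1 := Nat.le_ceil (J + |J| * d / a)
      have h2 : ((⌈J + |J| * d / a⌉₊ + 1 : ℕ) : ℝ) ≤ j := by exact_mod_cast hj
      push_cast at h2
      linarith
    have hy0 : 0 ≤ (j : ℝ) - J := by
      have : 0 ≤ |J| * d / a := by positivity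
      linarith
    have hlt : (Fintype.card (UC d j) : ℝ) * ((2 : ℝ) ^ (-t ((j : ℝ) - J))) ^ p1 < 1 := by
      rw [hcard, hRp, ← hJK, ← Real.rpow_add (by norm_num), ← Real.rpow_add (by norm_num)]
      apply Real.rpow_lt_one_of_one_lt_of_neg one_lt_two
      have h1 := ht2 _ hy0
      rw [abs_of_nonneg hy0] at h1
      have h2 : |J| * d / a < j - J := by linarith
      rw [div_lt_iff₀ ha] at h2
      have h3 := le_abs_self J
      nlinarith
    have hzero : ∀ f ∈ A j, f = 0 := by
      intro f hf
      funext m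
      by_contra hne
      have h1 : (1 : ℝ) ≤ |(f m : ℝ)| := by exact_mod_cast Int.one_le_abs hne
      have h2 : (1 : ℝ) ≤ |(f m : ℝ)| ^ p1 := Real.one_le_rpow h1 hp1.le
      have h3 : |(f m : ℝ)| ^ p1 ≤ ∑ m, |(f m : ℝ)| ^ p1 :=
        Finset.single_le_sum (f := fun m => |(f m : ℝ)| ^ p1)
          (fun _ _ => by positivity) (Finset.mem_univ m)
      have h4 : ∑ m, |(f m : ℝ)| ^ p1 ≤ _ := hf
      linarith
    intro f hf g hg
    rw [hzero f hf, hzero g hg]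
  have hB : ∀ F : Finset ℕ, ∑ j ∈ F, b j ≤ K * C1 * C2 := by
    intro F
    simp only [b]
    rw [← Finset.mul_sum]
    gcongr
    rw [← ENNReal.ofReal_le_ofReal_iff hC2.le,
      ENNReal.ofReal_sum_of_nonneg (fun _ _ => by positivity)]
    exact (ENNReal.sum_le_tsum F).trans (hgeo J)
  obtain ⟨hPf, hPc⟩ := count_pi A b _ (fun j => (hAb j).1) (fun j => (hAb j).2) hL hB
  set P := {f : ∀ j, UC d j → ℤ | ∀ j, f j ∈ A j} with hP
  let S : ℕ → ℝ := fun j => 2 ^ (t ((j : ℝ) - J) - j * σ1)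
  have hS : ∀ j, 0 < S j := fun j => by simp only [S]; positivity
  have hGf : (Set.image (dec d S) (P ×ˢ P)).Finite := (hPf.prod hPf).image _
  have hGc : (Set.image (dec d S) (P ×ˢ P)).ncard ≤ 2 ^ (k - 1) := by
    have h1 : ((Set.image (dec d S) (P ×ˢ P)).ncard : ℝ) ≤ Real.exp (k * (Real.log 2 / 2)) := by
      calc ((Set.image (dec d S) (P ×ˢ P)).ncard : ℝ) ≤ ((P ×ˢ P).ncard : ℝ) := by
            exact_mod_cast Set.ncard_image_le (hPf.prod hPf)
        _ = (P.ncard : ℝ) * P.ncard := by rw [Set.ncard_prod]; push_cast; rfl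
        _ ≤ Real.exp (K * C1 * C2) * Real.exp (K * C1 * C2) := by gcongr
        _ = Real.exp (k * (Real.log 2 / 2)) := by
            rw [← Real.exp_add]; congr 1; rw [hK, hc0]; field_simp; ring
    rcases Nat.lt_or_ge k 2 with h | h
    · have hk1 : k = 1 := by omega
      subst hk1
      have h2 : Real.exp (((1 : ℕ) : ℝ) * (Real.log 2 / 2)) < 2 := by
        rw [← Real.lt_log_iff_exp_lt (by norm_num)]; push_cast; linarith
      have h3 : ((Set.image (dec d S) (P ×ˢ P)).ncard : ℝ) < 2 := lt_of_le_of_lt h1 h2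
      have h4 : (Set.image (dec d S) (P ×ˢ P)).ncard < 2 := by exact_mod_cast h3
      simpa using Nat.lt_succ_iff.mp h4
    · have h2 : Real.exp (k * (Real.log 2 / 2)) ≤ 2 ^ (k - 1) := by
        rw [← Real.le_log_iff_exp_le (by positivity), Real.log_pow, Nat.cast_sub hk]
        have : (2 : ℝ) ≤ k := by exact_mod_cast h
        push_cast
        nlinarith
      exact_mod_cast h1.trans h2
  obtain ⟨cen, hcen⟩ := enum_cover _ hGf _ hGc
  apply sInf_le
  refine ⟨by rw [ENNReal.ofReal_pos]; positivity, cen, fun x hx => ?_⟩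
  have hlev := level_le_of_nNorm hq1 hx
  set g := dec d S (fun j m => tr ((x j m).re / S j), fun j m => tr ((x j m).im / S j)) with hg
  have hgG : g ∈ Set.image (dec d S) (P ×ˢ P) := by
    refine ⟨_, ⟨?_, ?_⟩, rfl⟩
    · intro j
      refine code_sum hp1 j _ (x j) (hlev j) _ (fun m => ?_)
      refine (tr_spec _).1.trans ?_
      rw [abs_div, abs_of_pos (hS j)]
      exact div_le_div_of_nonneg_right (Complex.abs_re_le_norm _) (hS j).le
    · intro j
      refine code_sum hp1 j _ (x j) (hlev j) _ (fun m => ?_)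
      refine (tr_spec _).1.trans ?_
      rw [abs_div, abs_of_pos (hS j)]
      exact div_le_div_of_nonneg_right (Complex.abs_im_le_norm _) (hS j).le
  obtain ⟨i, hi⟩ := hcen g hgG
  refine ⟨i, ?_⟩
  rw [hi]
  have hfinal := hnorm J (2 ^ r * K ^ (-s)) (x - g) (by positivity) (fun j => ?_)
  · refine hfinal.trans (le_of_eq ?_)
    congr 1
    rw [hK, Real.mul_rpow hc0p.le hk0.le, neg_div, ← hs]
    ring
  · refine (level_error (σ2 := σ2) hp1 hp2 hu1 hu2 hp hu j (t ((j : ℝ) - J)) (x j) (g j) (hlev j)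
      (fun m hm => (dec_err d S hS x j m hm).1)
      (fun m hm => (dec_err d S hS x j m hm).2.trans (le_of_eq ?_))).trans ?_
    · simp only [S]
      rw [add_sub_assoc, Real.rpow_add (by norm_num), Real.rpow_one]
    · have e2 : (2 : ℝ≥0∞) = ENNReal.ofReal 2 := by simp
      rw [e2, ENNReal.ofReal_rpow_of_pos (by norm_num)]
      apply ENNReal.ofReal_le_ofReal
      rw [← hJK, ← Real.rpow_mul (by norm_num), ← Real.rpow_add (by norm_num),
        ← Real.rpow_add (by norm_num)]
      apply Real.rpow_le_rpow_of_exponent_le (by norm_num)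
      have h1 := ht3 ((j : ℝ) - J)
      have h2 : σ1 - σ2 = d * s := by rw [hs]; field_simp
      rw [h2, ← hr]
      linarith


theorem small_count (p : ℝ) (hp : 0 < p) : ∃ R : ℝ, 0 < R ∧ ∀ (ι : Type) [Fintype ι],
    ∀ F : Finset (ι → ℤ), (∀ f ∈ F, ∑ i, |(f i : ℝ)| ^ p ≤ Fintype.card ι * R ^ p) →
    (F.card : ℝ) ≤ Real.exp (Fintype.card ι * (Real.log 2 / 4)) := by
  have hl2 : 0 < Real.log 2 := Real.log_pos one_lt_two
  have hl2' : Real.log 2 ≤ 1 := by linarith [Real.log_two_lt_d9]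
  obtain ⟨C, hC, hcount⟩ := count p hp
  obtain ⟨C1, hC1, hpoly⟩ := poly_exp p hp C C hC hC
  set z := max 0 (2 / p * Real.logb 2 (C1 / (Real.log 2 / 4))) with hz
  have hz0 : 0 ≤ z := le_max_left _ _
  have hz1 : C1 * (2 : ℝ) ^ (-(p / 2) * z) ≤ Real.log 2 / 4 := by
    have h1 : Real.logb 2 (C1 / (Real.log 2 / 4)) ≤ p / 2 * z := by
      have : 2 / p * Real.logb 2 (C1 / (Real.log 2 / 4)) ≤ z := le_max_right _ _
      calc _ = p / 2 * (2 / p * Real.logb 2 (C1 / (Real.log 2 / 4))) := by field_simp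
        _ ≤ _ := by gcongr
    have h2 : C1 / (Real.log 2 / 4) ≤ (2 : ℝ) ^ (p / 2 * z) := by
      rw [← Real.logb_le_iff_le_rpow (by norm_num) (by positivity)]; exact h1
    rw [neg_mul, Real.rpow_neg (by norm_num), ← div_eq_mul_inv, div_le_iff₀ (by positivity)]
    rw [div_le_iff₀ (by positivity)] at h2
    linarith
  refine ⟨2 ^ (-z), by positivity, fun ι _ F hF => ?_⟩
  refine (hcount ι _ (by positivity) F hF).trans ?_
  rw [Real.exp_le_exp, mul_assoc]
  gcongr
  refine le_trans ?_ hz1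
  refine le_trans ?_ (hpoly z hz0)
  have e1 : |Real.log ((2 : ℝ) ^ (-z))| ≤ z := by
    rw [Real.log_rpow (by norm_num), abs_mul, abs_neg, abs_of_pos hl2, abs_of_nonneg hz0]
    nlinarith
  have e2 : ((2 : ℝ) ^ (-z)) ^ p = 2 ^ (-p * z) := by
    rw [← Real.rpow_mul (by norm_num)]; congr 1; ring
  rw [e2]
  gcongr
  exact min_le_right _ _

theorem mNorm_zero (d : ℕ) (u p : ℝ) (hp : 0 < p) (j : ℕ) : mNorm d u p j 0 = 0 := by
  have h := (level_le_iff d u p hp j 0 0 0).mpr (by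
    intro ν _ k _
    simp [hp])
  simpa using h

theorem nNorm_single {d : ℕ} {σ u p : ℝ} {q : ℝ≥0∞} (hq : 0 < q) (hp : 0 < p)
    (x : ℕ → (Fin d → ℤ) → ℂ) (j : ℕ) (hx : ∀ i, i ≠ j → x i = 0)
    (h : (2 : ℝ≥0∞) ^ ((j : ℝ) * (σ - d / u)) * mNorm d u p j (x j) ≤ 1) :
    nNorm d σ u p q x ≤ 1 := by
  unfold nNorm
  split_ifs with hq'
  · apply iSup_le
    intro i
    by_cases hi : i = j
    · rw [hi]; exact h
    · rw [hx i hi, mNorm_zero d u p hp]; simp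
  · have hq0 : 0 < q.toReal := ENNReal.toReal_pos hq.ne' hq'
    rw [one_div, ENNReal.rpow_inv_le_iff hq0, tsum_eq_single j]
    · exact ENNReal.rpow_le_rpow h hq0.le
    · intro i hi
      rw [hx i hi, mNorm_zero d u p hp]; simp [hq0]

open Classical in
/-- test vectors -/
noncomputable def testv (d : ℕ) (j : ℕ) (σ : ℝ) (f : UC d j → Bool) : ℕ → (Fin d → ℤ) → ℂ :=
  fun i m => if i = j then
    (if h : cubeSub d j 0 m 0 then (if f ⟨m, h⟩ then (((2 : ℝ) ^ (-(j * σ)) : ℝ) : ℂ) else 0) else 0)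
    else 0

theorem testv_norm (d j : ℕ) {σ u p : ℝ} {q : ℝ≥0∞} (hq : 0 < q) (hp : 0 < p) (hu : 0 < u)
    (f : UC d j → Bool) : nNorm d σ u p q (testv d j σ f) ≤ 1 := by
  have h20 : (2 : ℝ≥0∞) ≠ 0 := by norm_num
  have h2t : (2 : ℝ≥0∞) ≠ ⊤ := by norm_num
  apply nNorm_single hq hp _ j
  · intro i hi
    funext m
    simp [testv, hi]
  · rw [level_le_iff _ _ _ hp]
    intro ν hν k hk
    have hb : ∀ m, (‖testv d j σ f j m‖₊ : ℝ≥0∞) ≤ 2 ^ (-(j * σ)) := by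
      intro m
      have h1 : ‖testv d j σ f j m‖ ≤ (2 : ℝ) ^ (-(j * σ)) := by
        have : (0 : ℝ) < (2 : ℝ) ^ (-(j * σ)) := by positivity
        simp only [testv, if_true]
        split_ifs
        · rw [Complex.norm_real, Real.norm_of_nonneg this.le]
        · simpa using this.le
        · simpa using this.le
      have := ENNReal.ofReal_le_ofReal h1
      rw [← ENNReal.ofReal_rpow_of_pos (by norm_num)] at this
      simpa [ofReal_norm, enorm_eq_nnnorm] using this
    calc _ ≤ ∑' m : {m : Fin d → ℤ // cubeSub d j ν m k}, ((2 : ℝ≥0∞) ^ (-(j * σ))) ^ p :=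
          ENNReal.tsum_le_tsum (fun m => ENNReal.rpow_le_rpow (hb _) hp.le)
      _ = (2 : ℝ≥0∞) ^ (((j : ℝ) - ν) * d) * ((2 : ℝ≥0∞) ^ (-(j * σ))) ^ p := by
          rw [tsum_fintype, Finset.sum_const, Finset.card_univ, card_cube, nsmul_eq_mul]
          congr 1
          push_cast
          rw [← ENNReal.rpow_natCast]
          push_cast [Nat.cast_sub hν]
          rfl
      _ ≤ _ := by
          rw [one_mul, ← ENNReal.rpow_mul, ← ENNReal.rpow_mul, ← ENNReal.rpow_add _ _ h20 h2t]
          apply ENNReal.rpow_le_rpow_of_exponent_le (by norm_num)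
          have h5 : 0 ≤ p * d * ν / u := by positivity
          rw [← sub_nonneg]
          refine h5.trans (le_of_eq ?_)
          field_simp
          ring

theorem ball_sum {d : ℕ} {σ u p : ℝ} {q : ℝ≥0∞} (hq : 0 < q) (hp : 0 < p)
    (y : ℕ → (Fin d → ℤ) → ℂ) (j : ℕ) (δ : ℝ) (hδ : 0 < δ)
    (h : nNorm d σ u p q y ≤ ENNReal.ofReal δ) :
    ∑ m : UC d j, ‖y j m‖ ^ p ≤ Fintype.card (UC d j) * (δ * 2 ^ (-(j * σ))) ^ p := by
  have hx := level_le_of_nNorm hq h j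
  rw [level_le_iff _ _ _ hp] at hx
  have h := hx 0 (Nat.zero_le _) 0 (by intro i; simp)
  rw [tsum_fintype] at h
  have h3 := ENNReal.toReal_mono (by
      apply ENNReal.rpow_ne_top_of_nonneg hp.le
      apply ENNReal.mul_ne_top (by simp)
      exact ENNReal.rpow_ne_top_of_ne_zero (by norm_num) (by norm_num)) h
  rw [ENNReal.toReal_sum (fun m _ => ENNReal.rpow_ne_top_of_nonneg hp.le (by simp)),
      ← ENNReal.toReal_rpow, ENNReal.toReal_mul, ← ENNReal.toReal_rpow,
      ENNReal.toReal_ofReal hδ.le] at h3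
  have h4 : ∑ m : UC d j, ‖y j m‖ ^ p ≤ (δ * (2 : ℝ) ^ (-(j * (σ - d / u) + d * (j - (0 : ℕ)) * (1 / u - 1 / p)))) ^ p := by
    simpa [← ENNReal.toReal_rpow] using h3
  refine h4.trans (le_of_eq ?_)
  rw [card_UC, Real.mul_rpow hδ.le (by positivity), Real.mul_rpow hδ.le (by positivity),
    mul_left_comm, ← Real.rpow_mul (by norm_num), ← Real.rpow_mul (by norm_num),
    ← Real.rpow_add (by norm_num)]
  congr 2
  push_cast
  field_simp
  ring

def b2z (b : Bool) : ℤ := if b then 1 else 0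

theorem lower (d : ℕ) (hd : 1 ≤ d) (σ1 σ2 u1 p1 u2 p2 : ℝ) (q1 q2 : ℝ≥0∞)
    (hq1 : 0 < q1) (hq2 : 0 < q2)
    (hp1 : 0 < p1) (hp2 : 0 < p2) (hu1 : 0 < u1)
    (hs0 : 0 < (σ1 - σ2) / d) :
    ∃ c1 : ℝ, 0 < c1 ∧ ∀ k : ℕ, 0 < k →
      ENNReal.ofReal (c1 * (k : ℝ) ^ (-(σ1 - σ2) / d)) ≤
      entropyNumber (nNorm d σ1 u1 p1 q1) (nNorm d σ2 u2 p2 q2) k := by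
  classical
  have hd0 : (0 : ℝ) < d := by exact_mod_cast hd
  set s := (σ1 - σ2) / d with hs
  have hl2 : 0 < Real.log 2 := Real.log_pos one_lt_two
  obtain ⟨R, hR, hcount⟩ := small_count p2 hp2
  set δ := R / 2 ^ (1 + 1 / p2) with hδ
  have hδ0 : 0 < δ := by positivity
  refine ⟨δ * (2 ^ d * 2) ^ (-s), by positivity, fun k hk => ?_⟩
  have hk0 : (0 : ℝ) < k := by exact_mod_cast hk
  have hk1 : (1 : ℝ) ≤ k := by exact_mod_cast hk
  obtain ⟨n, hn1, hn2⟩ := exists_nat_pow_near (x := 2 * (k : ℝ)) (y := (2 : ℝ) ^ d)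
    (by linarith) (one_lt_pow₀ one_lt_two (by omega))
  set j := n + 1 with hj
  have hN : (Fintype.card (UC d j) : ℝ) = ((2 : ℝ) ^ d) ^ (n + 1) := by
    rw [card_cube]; push_cast; rw [← pow_mul]; congr 1; rw [hj, Nat.sub_zero, mul_comm]
  set N : ℝ := (Fintype.card (UC d j) : ℝ) with hNdef
  have hNk : 2 * k < N := by rw [hN]; exact hn2
  have hNk2 : N ≤ 2 ^ d * 2 * k := by
    rw [hN, pow_succ, mul_comm, mul_assoc]; gcongr
  have hN0 : 0 < N := by linarith
  have hNs : N ^ (-s) = 2 ^ (-(j * (σ1 - σ2))) := by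
    rw [hNdef, card_UC, ← Real.rpow_mul (by norm_num)]
    congr 1; rw [hs]; field_simp
  apply le_sInf
  rintro ε ⟨-, cen, hcen⟩
  by_contra hlt
  push Not at hlt
  have hε : ε ≤ ENNReal.ofReal (δ * N ^ (-s)) := by
    refine hlt.le.trans (ENNReal.ofReal_le_ofReal ?_)
    rw [neg_div, ← hs, mul_assoc, ← Real.mul_rpow (by positivity) hk0.le]
    exact mul_le_mul_of_nonneg_left
      (Real.rpow_le_rpow_of_nonpos hN0 hNk2 (by linarith)) hδ0.le
  have hch : ∀ f : UC d j → Bool, ∃ i, nNorm d σ2 u2 p2 q2 (testv d j σ1 f - cen i) ≤ ε :=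
    fun f => hcen _ (testv_norm d j hq1 hp1 hu1 f)
  choose idx hidx using hch
  -- fibre bound
  have hfib : ∀ i, ((Finset.univ.filter (fun f => idx f = i)).card : ℝ) ≤
      Real.exp (N * (Real.log 2 / 4)) := by
    intro i
    rcases Finset.eq_empty_or_nonempty (Finset.univ.filter (fun f => idx f = i)) with he | ⟨g, hg⟩
    · rw [he]; simp; positivity
    · have hgi : idx g = i := by simpa using hg
      let φ : (UC d j → Bool) → (UC d j → ℤ) := fun f m => b2z (f m) - b2z (g m)
      have hφ : Function.Injective φ := by
        intro f f' hff
        funext m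
        have h1 : b2z (f m) - b2z (g m) = b2z (f' m) - b2z (g m) := congrFun hff m
        have h2 : b2z (f m) = b2z (f' m) := by linarith
        revert h2
        unfold b2z
        cases f m <;> cases f' m <;> simp
      rw [← Finset.card_image_of_injective _ hφ]
      apply hcount
      intro h hh
      obtain ⟨f, hf, rfl⟩ := Finset.mem_image.mp hh
      have hfi : idx f = i := by simpa using hf
      have b1 := ball_sum hq2 hp2 _ j (δ * N ^ (-s)) (by positivity) ((hidx f).trans hε)
      have b2 := ball_sum hq2 hp2 _ j (δ * N ^ (-s)) (by positivity) ((hidx g).trans hε)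
      rw [hfi] at b1
      rw [hgi] at b2
      rw [← hNdef] at b1 b2 ⊢
      have hpt : ∀ m : UC d j, |((φ f m : ℤ) : ℝ)| ^ p2 ≤ ((2 : ℝ) * 2 ^ (j * σ1)) ^ p2 *
          (‖(testv d j σ1 f - cen i) j m‖ ^ p2 + ‖(testv d j σ1 g - cen i) j m‖ ^ p2) := by
        intro m
        set X := ‖(testv d j σ1 f - cen i) j m‖ with hX
        set Y := ‖(testv d j σ1 g - cen i) j m‖ with hY
        have hX0 : 0 ≤ X := norm_nonneg _
        have hY0 : 0 ≤ Y := norm_nonneg _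
        have e0 : ∀ f : UC d j → Bool, testv d j σ1 f j m =
            (((2 : ℝ) ^ (-(j * σ1)) : ℝ) : ℂ) * ((b2z (f m) : ℝ) : ℂ) := by
          intro f
          have hm := m.2
          simp only [testv, if_true, dif_pos hm, b2z]
          split_ifs <;> simp
        have e1 : (2 : ℝ) ^ (-(j * σ1)) * |((φ f m : ℤ) : ℝ)| ≤ X + Y := by
          have : ‖(testv d j σ1 f - cen i) j m - (testv d j σ1 g - cen i) j m‖ =
              (2 : ℝ) ^ (-(j * σ1)) * |((φ f m : ℤ) : ℝ)| := by
            have e2 : (testv d j σ1 f - cen i) j m - (testv d j σ1 g - cen i) j m =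
                (((2 : ℝ) ^ (-(j * σ1)) * ((φ f m : ℤ) : ℝ) : ℝ) : ℂ) := by
              simp only [Pi.sub_apply, e0, φ]
              push_cast
              ring
            rw [e2, Complex.norm_real, Real.norm_eq_abs, abs_mul,
              abs_of_pos (by positivity)]
          rw [← this]
          exact norm_sub_le _ _
        have e3 : |((φ f m : ℤ) : ℝ)| ≤ 2 ^ (j * σ1) * (X + Y) := by
          calc |((φ f m : ℤ) : ℝ)| = 2 ^ (j * σ1) * ((2 : ℝ) ^ (-(j * σ1)) * |((φ f m : ℤ) : ℝ)|) := by
                rw [← mul_assoc, ← Real.rpow_add (by norm_num)]; simp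
            _ ≤ _ := by gcongr
        have e4 : |((φ f m : ℤ) : ℝ)| ≤ 2 * 2 ^ (j * σ1) * max X Y := by
          refine e3.trans ?_
          have h1 := le_max_left X Y
          have h2 := le_max_right X Y
          have h3 : (0 : ℝ) < 2 ^ (j * σ1) := by positivity
          nlinarith
        refine (Real.rpow_le_rpow (abs_nonneg _) e4 hp2.le).trans ?_
        rw [Real.mul_rpow (by positivity) (by positivity)]
        gcongr
        have hX1 : 0 ≤ X ^ p2 := by positivity
        have hY1 : 0 ≤ Y ^ p2 := by positivity
        rcases max_choice X Y with h | h <;> rw [h] <;> linarith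
      calc _ ≤ ∑ m : UC d j, ((2 : ℝ) * 2 ^ (j * σ1)) ^ p2 *
          (‖(testv d j σ1 f - cen i) j m‖ ^ p2 + ‖(testv d j σ1 g - cen i) j m‖ ^ p2) :=
            Finset.sum_le_sum (fun m _ => hpt m)
        _ = ((2 : ℝ) * 2 ^ (j * σ1)) ^ p2 * (∑ m : UC d j, ‖(testv d j σ1 f - cen i) j m‖ ^ p2 +
            ∑ m : UC d j, ‖(testv d j σ1 g - cen i) j m‖ ^ p2) := by
            rw [← Finset.mul_sum, Finset.sum_add_distrib]
        _ ≤ ((2 : ℝ) * 2 ^ (j * σ1)) ^ p2 * (N * (δ * N ^ (-s) * 2 ^ (-(j * σ2))) ^ p2 +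
            N * (δ * N ^ (-s) * 2 ^ (-(j * σ2))) ^ p2) := by gcongr
        _ = N * R ^ p2 := by
            have hRδ : R = δ * (2 * 2 ^ (1 / p2)) := by
              rw [hδ, Real.rpow_add (by norm_num), Real.rpow_one]; field_simp
            have h2 : (2 : ℝ) = (2 ^ (1 / p2)) ^ p2 := by
              rw [← Real.rpow_mul (by norm_num)]; field_simp; simp
            have h1 : (2 : ℝ) * 2 ^ (j * σ1) * (δ * N ^ (-s) * 2 ^ (-(j * σ2))) = δ * 2 := by
              rw [hNs]
              have : (2 : ℝ) ^ (j * σ1) * (2 ^ (-(j * (σ1 - σ2))) * 2 ^ (-(j * σ2))) = 1 := by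
                rw [← Real.rpow_add (by norm_num), ← Real.rpow_add (by norm_num)]
                ring_nf; simp
              linear_combination (2 * δ) * this
            have h4 : R ^ p2 = (δ * 2) ^ p2 * 2 := by
              rw [hRδ, ← mul_assoc, Real.mul_rpow (by positivity) (by positivity), ← h2]
            rw [h4, ← h1, Real.mul_rpow (by positivity) (by positivity)
              (x := (2 : ℝ) * 2 ^ (j * σ1))]
            ring
  have htot : (2 : ℝ) ^ N ≤ 2 ^ (k - 1) * Real.exp (N * (Real.log 2 / 4)) := by
    have h1 := Finset.card_eq_sum_card_fiberwise (f := idx) (s := Finset.univ) (t := Finset.univ)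
      (fun _ _ => Finset.mem_coe.mpr (Finset.mem_univ _))
    have h2 : ((Finset.univ : Finset (UC d j → Bool)).card : ℝ) = 2 ^ N := by
      rw [Finset.card_univ, Fintype.card_fun, Fintype.card_bool, hNdef, Real.rpow_natCast]
      push_cast; rfl
    rw [← h2, h1]
    push_cast
    refine (Finset.sum_le_sum (fun i _ => hfib i)).trans ?_
    simp
  have hlog := Real.log_le_log (by positivity) htot
  rw [Real.log_rpow (by norm_num), Real.log_mul (by positivity) (by positivity), Real.log_pow,
    Real.log_exp, Nat.cast_sub hk] at hlog
  push_cast at hlog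
  nlinarith

theorem stmt2 (d : ℕ) (hd : 1 ≤ d) (σ1 σ2 u1 p1 u2 p2 : ℝ) (q1 q2 : ℝ≥0∞)
    (hq1 : 0 < q1) (hq2 : 0 < q2)
    (hp1 : 0 < p1) (hp1u1 : p1 ≤ u1) (hp2 : 0 < p2) (hp2u2 : p2 ≤ u2)
    (h1 : (σ1 - σ2) / d > p1 / u1 * (1 / p1 - 1 / p2))
    (h2 : p1 / u1 * (1 / p1 - 1 / p2) > max 0 (1 / u1 - 1 / u2))
    (h3 : (σ1 - σ2) / d > 1 / p1 - 1 / p2) :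
    ∃ c1 c2 : ℝ, 0 < c1 ∧ 0 < c2 ∧ ∀ k : ℕ, 0 < k →
      ENNReal.ofReal (c1 * (k : ℝ) ^ (-(σ1 - σ2) / d)) ≤
          entropyNumber (nNorm d σ1 u1 p1 q1) (nNorm d σ2 u2 p2 q2) k ∧
        entropyNumber (nNorm d σ1 u1 p1 q1) (nNorm d σ2 u2 p2 q2) k ≤
          ENNReal.ofReal (c2 * (k : ℝ) ^ (-(σ1 - σ2) / d)) := by
  have hu1 : 0 < u1 := hp1.trans_le hp1u1
  have hu2 : 0 < u2 := hp2.trans_le hp2u2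
  have ha : 0 < p1 / u1 * (1 / p1 - 1 / p2) := lt_of_le_of_lt (le_max_left _ _) h2
  have hb : 1 / u1 - 1 / u2 < p1 / u1 * (1 / p1 - 1 / p2) := lt_of_le_of_lt (le_max_right _ _) h2
  have hp : p1 < p2 := by
    have h4 : 0 < 1 / p1 - 1 / p2 := pos_of_mul_pos_right ha (by positivity)
    have h5 : 1 / p2 < 1 / p1 := by linarith
    exact (one_div_lt_one_div hp2 hp1).mp h5
  have hu : p1 / (u1 * p2) ≤ 1 / u2 := by
    have : p1 / u1 * (1 / p1 - 1 / p2) = 1 / u1 - p1 / (u1 * p2) := by field_simp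
    linarith
  obtain ⟨c1, hc1, hl⟩ := lower d hd σ1 σ2 u1 p1 u2 p2 q1 q2 hq1 hq2 hp1 hp2 hu1 (ha.trans h1)
  obtain ⟨c2, hc2, hup⟩ := upper d hd σ1 σ2 u1 p1 u2 p2 q1 q2 hq1 hq2 hp1 hp2 hu1 hu2 hp hu h3
  exact ⟨c1, c2, hc1, hc2, fun k hk => ⟨hl k hk, hup k hk⟩⟩
end
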